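/- Let X ⊂ ℝ³ be a Vázsonyi set, i.e., a finite set of diameter 1 with |X| = m such that the number of unordered pairs {x,y} ⊆ X with dist(x,y) = 1 is exactly 2m − 2 and every point of X is at distance 1 from at least 3 other points of X. Let Ω = ⋂_{x∈X} B(x,1) be the intersection of the closed unit balls centered at the points of X. Then the set of vertices of Ω is exactly X, where p ∈ ∂Ω is a vertex of Ω if A_p = {x ∈ X : dist(p,x) = 1} is not contained in any 2-dimensional affine plane of ℝ³ passing through p. (That is, Ω is a Reuleaux polyhedron with vertex set X.) -/

import Mathlib

section Comb
open Classical

theorem vz_seq (M : ℕ) (f : ℕ → Prop) (h0 : f 0 ↔ f M) (k j : ℕ) (hk : k < M) (hj : j ≤ M)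
    (hfj : ¬ f j) :
    (if f k then 1 else 0) + (if f (k+1) then 1 else 0) ≤
      ∑ t ∈ Finset.range M, (if t ≠ k ∧ ¬ (f t ↔ f (t+1)) then 1 else 0 : ℕ) := by
  have key : ∀ a b : ℕ, a ≤ b → (if f a ↔ f b then 0 else 1 : ℕ) ≤
      ∑ t ∈ Finset.Ico a b, (if ¬ (f t ↔ f (t+1)) then 1 else 0 : ℕ) := by
    intro a b hab
    induction b, hab using Nat.le_induction with
    | base => simp
    | succ b hab ih =>
      rw [Finset.sum_Ico_succ_top hab]
      by_cases h1 : f a <;> by_cases h2 : f b <;> by_cases h3 : f (b+1) <;> simp_all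
  have split : ∑ t ∈ Finset.range M, (if t ≠ k ∧ ¬ (f t ↔ f (t+1)) then 1 else 0 : ℕ)
      = ∑ t ∈ Finset.Ico 0 k, (if ¬ (f t ↔ f (t+1)) then 1 else 0 : ℕ)
      + ∑ t ∈ Finset.Ico (k+1) M, (if ¬ (f t ↔ f (t+1)) then 1 else 0 : ℕ) := by
    rw [Finset.range_eq_Ico, ← Finset.sum_Ico_consecutive _ (Nat.zero_le k) hk.le,
      Finset.sum_eq_sum_Ico_succ_bot hk]
    simp only [ne_eq, not_true_eq_false, false_and, if_false, zero_add]
    congr 1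
    · apply Finset.sum_congr rfl
      intro t ht
      have : t ≠ k := by have := (Finset.mem_Ico.mp ht).2; omega
      simp [this]
    · apply Finset.sum_congr rfl
      intro t ht
      have : t ≠ k := by have := (Finset.mem_Ico.mp ht).1; omega
      simp [this]
  rw [split]
  rcases Nat.lt_or_ge k j with h | h
  · rw [← Finset.sum_Ico_consecutive _ (show k+1 ≤ j from h) hj]
    have e1 := key 0 k (Nat.zero_le _)
    have e2 := key (k+1) j h
    have e3 := key j M hj
    by_cases h1 : f k <;> by_cases h2 : f (k+1) <;> by_cases h3 : f 0 <;> simp_all <;> omega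
  · rw [← Finset.sum_Ico_consecutive _ (Nat.zero_le j) h]
    have e1 := key 0 j (Nat.zero_le _)
    have e2 := key j k h
    have e3 := key (k+1) M hk
    by_cases h1 : f k <;> by_cases h2 : f (k+1) <;> by_cases h3 : f 0 <;> simp_all <;> omega

theorem vz_prop (a a' d d' : ℕ) (zl zr wl wr o o' : Prop) (ha : a + a' ≤ 1) (hd : d + d' ≤ 1)
    (h1 : zl → wl → (o' ↔ ¬ o)) (h2 : zr → wr → (o' ↔ ¬ o)) :
    (if (¬ zl ∧ ¬ wl ∧ (zr ∨ wr)) ∨ (¬ zr ∧ ¬ wr ∧ (zl ∨ wl)) then a * d' + a' * d else 0)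
    + (if ¬ ((zl ∧ ¬ (wl ∧ o')) ↔ (zr ∧ ¬ (wr ∧ o'))) then a else 0)
    + (if ¬ ((wl ∧ ¬ (zl ∧ o)) ↔ (wr ∧ ¬ (zr ∧ o))) then a' else 0)
    + (if ¬ ((zl ∧ ¬ (wl ∧ o)) ↔ (zr ∧ ¬ (wr ∧ o))) then d else 0)
    + (if ¬ ((wl ∧ ¬ (zl ∧ o')) ↔ (wr ∧ ¬ (zr ∧ o'))) then d' else 0) + 2 ≤
    ((if zl ∧ wl ∧ o then 1 else 0) + (if zl ∧ wl ∧ o' then 1 else 0) + (if zr ∧ wr ∧ o then 1 else 0)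
      + (if zr ∧ wr ∧ o' then 1 else 0))
     + 2 * ((if zl then 0 else 1) + (if zr then 0 else 1) + (if wl then 0 else 1) + (if wr then 0 else 1)) := by
  have hp : a * d' ≤ a ∧ a * d' ≤ d' ∧ a' * d ≤ a' ∧ a' * d ≤ d := by
    have : a ≤ 1 := by omega
    have : a' ≤ 1 := by omega
    have : d ≤ 1 := by omega
    have : d' ≤ 1 := by omega
    refine ⟨?_, ?_, ?_, ?_⟩ <;> nlinarith
  obtain ⟨p1, p2, p3, p4⟩ := hp
  generalize a * d' = x at *
  generalize a' * d = y at *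
  by_cases k1 : zl <;> by_cases k2 : zr <;> by_cases k3 : wl <;> by_cases k4 : wr <;>
   by_cases k5 : o <;> by_cases k6 : o' <;>
   simp only [k1, k2, k3, k4, k5, k6, true_and, and_true, false_and, and_false, not_true, not_false_eq_true,
     if_true, if_false, true_or, or_true, false_or, or_false, iff_true, iff_false, true_iff, false_iff, forall_const, true_imp_iff, false_imp_iff, imp_false] at h1 h2 ⊢ <;> omega


def VzN {Reg : Type*} (col : Reg → Bool) (ab : Reg → Reg → Prop) (p : Reg → Prop) (U L : Reg) : Prop :=
  col U ≠ col L ∧ p U ∧ p L ∧ ab U L ∧ ∀ V, p V → ab U V → ¬ ab V L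

theorem vz_local_other {Reg : Type*} (col : Reg → Bool) (ab : Reg → Reg → Prop) (pl pr : Reg → Prop)
    (Z W : Reg)
    (hasym : ∀ U V, ab U V → ¬ ab V U)
    (htr : ∀ U V T, pr U → pr V → pr T → ab U V → ab V T → ab U T)
    (hsame : ∀ U, U ≠ Z → U ≠ W → (pl U ↔ pr U))
    (hloc : ∀ U, U ≠ Z → U ≠ W → pl U → (ab U Z ∧ ab U W) ∨ (ab Z U ∧ ab W U))
    (U L : Reg) (hU : U ≠ Z ∧ U ≠ W) (hL : L ≠ Z ∧ L ≠ W)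
    (h1 : VzN col ab pl U L) (h2 : ¬ VzN col ab pr U L) :
    ((ab U Z ∧ ab U W) ∧ ∀ V, V ≠ Z → V ≠ W → pl V → ab V Z → ¬ ab U V) ∧
    ((ab Z L ∧ ab W L) ∧ ∀ V, V ≠ Z → V ≠ W → pl V → ab Z V → ¬ ab V L) ∧ ¬ pl Z ∧ ¬ pl W ∧ (pr Z ∨ pr W) := by
  obtain ⟨hc, pU, pL, hUL, hb⟩ := h1
  have pU' := (hsame U hU.1 hU.2).1 pU
  have pL' := (hsame L hL.1 hL.2).1 pL
  have : ∃ V, pr V ∧ ab U V ∧ ab V L := by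
    by_contra hcon
    push Not at hcon
    exact h2 ⟨hc, pU', pL', hUL, hcon⟩
  obtain ⟨V, pV, hUV, hVL⟩ := this
  have hV : V = Z ∨ V = W := by
    by_contra hcon
    push Not at hcon
    exact hb V ((hsame V hcon.1 hcon.2).2 pV) hUV hVL
  have hUu : ab U Z ∧ ab U W := by
    rcases hloc U hU.1 hU.2 pU with h | h
    · exact h
    · rcases hV with rfl | rfl
      · exact absurd h.1 (hasym _ _ hUV)
      · exact absurd h.2 (hasym _ _ hUV)
  have hLl : ab Z L ∧ ab W L := by
    rcases hloc L hL.1 hL.2 pL with h | h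
    · rcases hV with rfl | rfl
      · exact absurd h.1 (hasym _ _ hVL)
      · exact absurd h.2 (hasym _ _ hVL)
    · exact h
  refine ⟨⟨hUu, ?_⟩, ⟨hLl, ?_⟩, ?_, ?_, ?_⟩
  · intro T hT1 hT2 pT hTZ hUT
    have hTV : ab T V := by
      rcases hloc T hT1 hT2 pT with h | h
      · rcases hV with rfl | rfl
        · exact h.1
        · exact h.2
      · exact absurd h.1 (hasym _ _ hTZ)
    exact hb T pT hUT (htr T V L ((hsame T hT1 hT2).1 pT) pV pL' hTV hVL)
  · intro T hT1 hT2 pT hZT hTL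
    have hVT : ab V T := by
      rcases hloc T hT1 hT2 pT with h | h
      · exact absurd h.1 (hasym _ _ hZT)
      · rcases hV with rfl | rfl
        · exact h.1
        · exact h.2
    exact hb T pT (htr U V T pU' pV ((hsame T hT1 hT2).1 pT) hUV hVT) hTL
  · intro pZ; exact hb Z pZ hUu.1 hLl.1
  · intro pW; exact hb W pW hUu.2 hLl.2
  · rcases hV with rfl | rfl
    · exact Or.inl pV
    · exact Or.inr pV

theorem vz_local_up {Reg : Type*} (col : Reg → Bool) (ab : Reg → Reg → Prop) (p : Reg → Prop)
    (Z W : Reg)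
    (hasym : ∀ U V, ab U V → ¬ ab V U)
    (hloc : ∀ U, U ≠ Z → U ≠ W → p U → (ab U Z ∧ ab U W) ∨ (ab Z U ∧ ab W U))
    (U : Reg) (hU : U ≠ Z ∧ U ≠ W) :
    VzN col ab p U Z ↔ (col U ≠ col Z ∧ (p U ∧ (ab U Z ∧ ab U W) ∧
      ∀ V, V ≠ Z → V ≠ W → p V → ab V Z → ¬ ab U V)) ∧ (p Z ∧ ¬ (p W ∧ ab W Z)) := by
  constructor
  · rintro ⟨hc, pU, pZ, hUZ, hb⟩
    have h2 : ab U Z ∧ ab U W := by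
      rcases hloc U hU.1 hU.2 pU with h | h
      · exact h
      · exact absurd h.1 (hasym _ _ hUZ)
    exact ⟨⟨hc, pU, h2, fun V _ _ pV hVZ hUV => hb V pV hUV hVZ⟩, pZ, fun h => hb W h.1 h2.2 h.2⟩
  · rintro ⟨⟨hc, pU, h2, hm⟩, pZ, hw⟩
    refine ⟨hc, pU, pZ, h2.1, ?_⟩
    intro V pV hUV hVZ
    by_cases hZ : V = Z
    · subst hZ; exact hasym _ _ hVZ hVZ
    by_cases hW : V = W
    · subst hW; exact hw ⟨pV, hVZ⟩
    exact hm V hZ hW pV hVZ hUV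

theorem vz_local_dn {Reg : Type*} (col : Reg → Bool) (ab : Reg → Reg → Prop) (p : Reg → Prop)
    (Z W : Reg)
    (hasym : ∀ U V, ab U V → ¬ ab V U)
    (hloc : ∀ U, U ≠ Z → U ≠ W → p U → (ab U Z ∧ ab U W) ∨ (ab Z U ∧ ab W U))
    (L : Reg) (hL : L ≠ Z ∧ L ≠ W) :
    VzN col ab p Z L ↔ (col L ≠ col Z ∧ (p L ∧ (ab Z L ∧ ab W L) ∧
      ∀ V, V ≠ Z → V ≠ W → p V → ab Z V → ¬ ab V L)) ∧ (p Z ∧ ¬ (p W ∧ ab Z W)) := by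
  constructor
  · rintro ⟨hc, pZ, pL, hZL, hb⟩
    have h2 : ab Z L ∧ ab W L := by
      rcases hloc L hL.1 hL.2 pL with h | h
      · exact absurd h.1 (hasym _ _ hZL)
      · exact h
    exact ⟨⟨hc.symm, pL, h2, fun V _ _ pV hZV hVL => hb V pV hZV hVL⟩, pZ, fun h => hb W h.1 h.2 h2.2⟩
  · rintro ⟨⟨hc, pL, h2, hm⟩, pZ, hw⟩
    refine ⟨hc.symm, pZ, pL, h2.1, ?_⟩
    intro V pV hZV hVL
    by_cases hZ : V = Z
    · subst hZ; exact hasym _ _ hZV hZV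
    by_cases hW : V = W
    · subst hW; exact hw ⟨pV, hZV⟩
    exact hm V hZ hW pV hZV hVL

set_option maxHeartbeats 4000000 in
theorem vz_local {Reg : Type*} [Fintype Reg] (col : Reg → Bool) (ab : Reg → Reg → Prop)
    (pl pr : Reg → Prop) (Z W : Reg) (hcZ : col Z = true) (hcW : col W = false)
    (hasym : ∀ U V, ab U V → ¬ ab V U)
    (htrl : ∀ U V T, pl U → pl V → pl T → ab U V → ab V T → ab U T)
    (htrr : ∀ U V T, pr U → pr V → pr T → ab U V → ab V T → ab U T)
    (htotl : ∀ U V, U ≠ V → pl U → pl V → ab U V ∨ ab V U)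
    (htotr : ∀ U V, U ≠ V → pr U → pr V → ab U V ∨ ab V U)
    (hsame : ∀ U, U ≠ Z → U ≠ W → (pl U ↔ pr U))
    (hloc : ∀ U, U ≠ Z → U ≠ W → pl U → (ab U Z ∧ ab U W) ∨ (ab Z U ∧ ab W U)) :
    (Finset.univ.filter fun P : Reg × Reg => (P ≠ (Z, W) ∧ P ≠ (W, Z)) ∧
      ¬ (VzN col ab pl P.1 P.2 ↔ VzN col ab pr P.1 P.2)).card + 2 ≤
    ((if VzN col ab pl Z W then 1 else 0) + (if VzN col ab pl W Z then 1 else 0)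
      + (if VzN col ab pr Z W then 1 else 0) + (if VzN col ab pr W Z then 1 else 0))
    + 2 * ((if pl Z then 0 else 1) + (if pr Z then 0 else 1) + (if pl W then 0 else 1)
      + (if pr W then 0 else 1)) := by
  have hZW : Z ≠ W := by rintro rfl; simp_all
  have hloc' : ∀ U, U ≠ Z → U ≠ W → pr U → (ab U Z ∧ ab U W) ∨ (ab Z U ∧ ab W U) :=
    fun U h1 h2 h3 => hloc U h1 h2 ((hsame U h1 h2).2 h3)
  set A : Reg → Prop := fun U => (U ≠ Z ∧ U ≠ W) ∧ pl U ∧ (ab U Z ∧ ab U W) ∧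
      ∀ V, V ≠ Z → V ≠ W → pl V → ab V Z → ¬ ab U V with hA
  set D : Reg → Prop := fun L => (L ≠ Z ∧ L ≠ W) ∧ pl L ∧ (ab Z L ∧ ab W L) ∧
      ∀ V, V ≠ Z → V ≠ W → pl V → ab Z V → ¬ ab V L with hD
  have Auniq : ∀ U V, A U → A V → U = V := by
    intro U V hU hV
    by_contra hne
    rcases htotl U V hne hU.2.1 hV.2.1 with h | h
    · exact hU.2.2.2 V hV.1.1 hV.1.2 hV.2.1 hV.2.2.1.1 h
    · exact hV.2.2.2 U hU.1.1 hU.1.2 hU.2.1 hU.2.2.1.1 h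
  have Duniq : ∀ U V, D U → D V → U = V := by
    intro U V hU hV
    by_contra hne
    rcases htotl U V hne hU.2.1 hV.2.1 with h | h
    · exact hV.2.2.2 U hU.1.1 hU.1.2 hU.2.1 hU.2.2.1.1 h
    · exact hU.2.2.2 V hV.1.1 hV.1.2 hV.2.1 hV.2.2.1.1 h
  -- symmetric description
  have exW : ∀ p : Reg → Prop, (∀ U, U ≠ Z → U ≠ W → (pl U ↔ p U)) → ∀ V, V ≠ Z → V ≠ W → p V →
      ((ab V Z ↔ ab V W) ∧ (ab Z V ↔ ab W V)) := by
    intro p hp V h1 h2 h3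
    rcases hloc V h1 h2 ((hp V h1 h2).2 h3) with h | h
    · exact ⟨by tauto, ⟨fun h' => absurd h' (hasym _ _ h.1), fun h' => absurd h' (hasym _ _ h.2)⟩⟩
    · exact ⟨⟨fun h' => absurd h' (hasym _ _ h.1), fun h' => absurd h' (hasym _ _ h.2)⟩, by tauto⟩
  have upZ : ∀ p : Reg → Prop, (∀ U, U ≠ Z → U ≠ W → (pl U ↔ p U)) → ∀ U, U ≠ Z → U ≠ W →
      (VzN col ab p U Z ↔ (col U = false ∧ A U) ∧ (p Z ∧ ¬ (p W ∧ ab W Z))) := by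
    intro p hp U h1 h2
    rw [vz_local_up col ab p Z W hasym (fun V a b c => hloc V a b ((hp V a b).2 c)) U ⟨h1, h2⟩]
    rw [hcZ]
    simp only [hA, ne_eq, h1, h2, not_false_eq_true, true_and, hp U h1 h2, Bool.not_eq_true]
    constructor
    · rintro ⟨⟨a, b, c, d⟩, e⟩
      exact ⟨⟨a, b, c, fun V v1 v2 v3 => d V v1 v2 ((hp V v1 v2).1 v3)⟩, e⟩
    · rintro ⟨⟨a, b, c, d⟩, e⟩
      exact ⟨⟨a, b, c, fun V v1 v2 v3 => d V v1 v2 ((hp V v1 v2).2 v3)⟩, e⟩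
  have upW : ∀ p : Reg → Prop, (∀ U, U ≠ Z → U ≠ W → (pl U ↔ p U)) → ∀ U, U ≠ Z → U ≠ W →
      (VzN col ab p U W ↔ (col U = true ∧ A U) ∧ (p W ∧ ¬ (p Z ∧ ab Z W))) := by
    intro p hp U h1 h2
    rw [vz_local_up col ab p W Z hasym
      (fun V a b c => by have := hloc V b a ((hp V b a).2 c); tauto) U ⟨h2, h1⟩]
    rw [hcW]
    simp only [hA, ne_eq, h1, h2, not_false_eq_true, true_and, hp U h1 h2, Bool.not_eq_false]
    constructor
    · rintro ⟨⟨a, b, c, d⟩, e⟩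
      exact ⟨⟨a, b, c.symm, fun V v1 v2 v3 v4 => d V v2 v1 ((hp V v1 v2).1 v3)
        ((exW pl (fun _ _ _ => Iff.rfl) V v1 v2 v3).1.1 v4)⟩, e⟩
    · rintro ⟨⟨a, b, c, d⟩, e⟩
      exact ⟨⟨a, b, c.symm, fun V v2 v1 v3 v4 => d V v1 v2 ((hp V v1 v2).2 v3)
        ((exW p hp V v1 v2 v3).1.2 v4)⟩, e⟩
  have dnZ : ∀ p : Reg → Prop, (∀ U, U ≠ Z → U ≠ W → (pl U ↔ p U)) → ∀ U, U ≠ Z → U ≠ W →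
      (VzN col ab p Z U ↔ (col U = false ∧ D U) ∧ (p Z ∧ ¬ (p W ∧ ab Z W))) := by
    intro p hp U h1 h2
    rw [vz_local_dn col ab p Z W hasym (fun V a b c => hloc V a b ((hp V a b).2 c)) U ⟨h1, h2⟩]
    rw [hcZ]
    simp only [hD, ne_eq, h1, h2, not_false_eq_true, true_and, hp U h1 h2, Bool.not_eq_true]
    constructor
    · rintro ⟨⟨a, b, c, d⟩, e⟩
      exact ⟨⟨a, b, c, fun V v1 v2 v3 => d V v1 v2 ((hp V v1 v2).1 v3)⟩, e⟩
    · rintro ⟨⟨a, b, c, d⟩, e⟩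
      exact ⟨⟨a, b, c, fun V v1 v2 v3 => d V v1 v2 ((hp V v1 v2).2 v3)⟩, e⟩
  have dnW : ∀ p : Reg → Prop, (∀ U, U ≠ Z → U ≠ W → (pl U ↔ p U)) → ∀ U, U ≠ Z → U ≠ W →
      (VzN col ab p W U ↔ (col U = true ∧ D U) ∧ (p W ∧ ¬ (p Z ∧ ab W Z))) := by
    intro p hp U h1 h2
    rw [vz_local_dn col ab p W Z hasym
      (fun V a b c => by have := hloc V b a ((hp V b a).2 c); tauto) U ⟨h2, h1⟩]
    rw [hcW]
    simp only [hD, ne_eq, h1, h2, not_false_eq_true, true_and, hp U h1 h2, Bool.not_eq_false]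
    constructor
    · rintro ⟨⟨a, b, c, d⟩, e⟩
      exact ⟨⟨a, b, c.symm, fun V v1 v2 v3 v4 => d V v2 v1 ((hp V v1 v2).1 v3)
        ((exW pl (fun _ _ _ => Iff.rfl) V v1 v2 v3).2.1 v4)⟩, e⟩
    · rintro ⟨⟨a, b, c, d⟩, e⟩
      exact ⟨⟨a, b, c.symm, fun V v2 v1 v3 v4 => d V v1 v2 ((hp V v1 v2).2 v3)
        ((exW p hp V v1 v2 v3).2.2 v4)⟩, e⟩
  have nZW : ∀ p : Reg → Prop, (∀ U, U ≠ Z → U ≠ W → (pl U ↔ p U)) →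
      (VzN col ab p Z W ↔ p Z ∧ p W ∧ ab Z W) := by
    intro p hp
    refine ⟨fun h => ⟨h.2.1, h.2.2.1, h.2.2.2.1⟩, fun h => ⟨by simp [hcZ, hcW], h.1, h.2.1, h.2.2, ?_⟩⟩
    intro V pV h1 h2
    by_cases hZ : V = Z
    · subst hZ; exact hasym _ _ h1 h1
    by_cases hW : V = W
    · subst hW; exact hasym _ _ h2 h2
    exact hasym _ _ h1 ((exW p hp V hZ hW pV).1.2 h2)
  have nWZ : ∀ p : Reg → Prop, (∀ U, U ≠ Z → U ≠ W → (pl U ↔ p U)) →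
      (VzN col ab p W Z ↔ p Z ∧ p W ∧ ab W Z) := by
    intro p hp
    refine ⟨fun h => ⟨h.2.2.1, h.2.1, h.2.2.2.1⟩, fun h => ⟨by simp [hcZ, hcW], h.2.1, h.1, h.2.2, ?_⟩⟩
    intro V pV h1 h2
    by_cases hZ : V = Z
    · subst hZ; exact hasym _ _ h2 h2
    by_cases hW : V = W
    · subst hW; exact hasym _ _ h1 h1
    exact hasym _ _ h1 ((exW p hp V hZ hW pV).1.1 h2)
  have hpl : ∀ U, U ≠ Z → U ≠ W → (pl U ↔ pl U) := fun _ _ _ => Iff.rfl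
  have other : ∀ U L, (U ≠ Z ∧ U ≠ W) → (L ≠ Z ∧ L ≠ W) → ¬ (VzN col ab pl U L ↔ VzN col ab pr U L) →
      col U ≠ col L ∧ A U ∧ D L ∧ ((¬ pl Z ∧ ¬ pl W ∧ (pr Z ∨ pr W)) ∨ (¬ pr Z ∧ ¬ pr W ∧ (pl Z ∨ pl W))) := by
    intro U L hU hL hn
    by_cases h1 : VzN col ab pl U L
    · have h2 : ¬ VzN col ab pr U L := fun h2 => hn ⟨fun _ => h2, fun _ => h1⟩
      have := vz_local_other col ab pl pr Z W hasym htrr hsame hloc U L hU hL h1 h2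
      exact ⟨h1.1, ⟨hU, h1.2.1, this.1⟩, ⟨hL, h1.2.2.1, this.2.1⟩, Or.inl this.2.2⟩
    · have h2 : VzN col ab pr U L := by tauto
      have := vz_local_other col ab pr pl Z W hasym htrl (fun V a b => (hsame V a b).symm) hloc' U L hU hL h2 h1
      refine ⟨h2.1, ⟨hU, (hsame U hU.1 hU.2).2 h2.2.1, this.1.1, ?_⟩,
        ⟨hL, (hsame L hL.1 hL.2).2 h2.2.2.1, this.2.1.1, ?_⟩, Or.inr this.2.2⟩
      · exact fun V a b c => this.1.2 V a b ((hsame V a b).1 c)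
      · exact fun V a b c => this.2.1.2 V a b ((hsame V a b).1 c)
  let Ab := Finset.univ.filter fun U => col U = false ∧ A U
  let Ar := Finset.univ.filter fun U => col U = true ∧ A U
  let Db := Finset.univ.filter fun U => col U = false ∧ D U
  let Dr := Finset.univ.filter fun U => col U = true ∧ D U
  have mAb : ∀ U, col U = false ∧ A U → U ∈ Ab := fun U h => Finset.mem_filter.2 ⟨Finset.mem_univ _, h⟩
  have mAr : ∀ U, col U = true ∧ A U → U ∈ Ar := fun U h => Finset.mem_filter.2 ⟨Finset.mem_univ _, h⟩
  have mDb : ∀ U, col U = false ∧ D U → U ∈ Db := fun U h => Finset.mem_filter.2 ⟨Finset.mem_univ _, h⟩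
  have mDr : ∀ U, col U = true ∧ D U → U ∈ Dr := fun U h => Finset.mem_filter.2 ⟨Finset.mem_univ _, h⟩
  have sub : (Finset.univ.filter fun P : Reg × Reg => (P ≠ (Z, W) ∧ P ≠ (W, Z)) ∧
      ¬ (VzN col ab pl P.1 P.2 ↔ VzN col ab pr P.1 P.2)) ⊆
      (if (¬ pl Z ∧ ¬ pl W ∧ (pr Z ∨ pr W)) ∨ (¬ pr Z ∧ ¬ pr W ∧ (pl Z ∨ pl W)) then
        (Ab ×ˢ Dr) ∪ (Ar ×ˢ Db) else ∅)
      ∪ (if ¬ ((pl Z ∧ ¬ (pl W ∧ ab W Z)) ↔ (pr Z ∧ ¬ (pr W ∧ ab W Z))) then Ab ×ˢ {Z} else ∅)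
      ∪ (if ¬ ((pl W ∧ ¬ (pl Z ∧ ab Z W)) ↔ (pr W ∧ ¬ (pr Z ∧ ab Z W))) then Ar ×ˢ {W} else ∅)
      ∪ (if ¬ ((pl Z ∧ ¬ (pl W ∧ ab Z W)) ↔ (pr Z ∧ ¬ (pr W ∧ ab Z W))) then {Z} ×ˢ Db else ∅)
      ∪ (if ¬ ((pl W ∧ ¬ (pl Z ∧ ab W Z)) ↔ (pr W ∧ ¬ (pr Z ∧ ab W Z))) then {W} ×ˢ Dr else ∅) := by
    rintro ⟨U, L⟩ hP
    simp only [Finset.mem_filter, Finset.mem_univ, true_and, ne_eq, Prod.mk.injEq] at hP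
    obtain ⟨⟨hn1, hn2⟩, hch⟩ := hP
    have hirr : ∀ p T, ¬ VzN col ab p T T := fun p T h => h.1 rfl
    by_cases hUZ : U = Z
    · subst hUZ
      by_cases hLZ : L = U
      · subst hLZ; exact absurd (iff_of_false (hirr _ _) (hirr _ _)) hch
      have hLW : L ≠ W := fun h => hn1 ⟨rfl, h⟩
      rw [dnZ pl hpl L hLZ hLW, dnZ pr hsame L hLZ hLW] at hch
      have hD' : col L = false ∧ D L := by by_contra hc; exact hch ⟨fun h => absurd h.1 hc, fun h => absurd h.1 hc⟩
      have hc' : ¬ ((pl U ∧ ¬ (pl W ∧ ab U W)) ↔ (pr U ∧ ¬ (pr W ∧ ab U W))) := by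
        intro hc; exact hch (and_congr_right fun _ => hc)
      apply Finset.mem_union_left
      apply Finset.mem_union_right
      rw [if_pos hc']
      exact Finset.mk_mem_product (Finset.mem_singleton_self _) (mDb _ hD')
    by_cases hUW : U = W
    · subst hUW
      by_cases hLW : L = U
      · subst hLW; exact absurd (iff_of_false (hirr _ _) (hirr _ _)) hch
      have hLZ : L ≠ Z := fun h => hn2 ⟨rfl, h⟩
      rw [dnW pl hpl L hLZ hLW, dnW pr hsame L hLZ hLW] at hch
      have hD' : col L = true ∧ D L := by by_contra hc; exact hch ⟨fun h => absurd h.1 hc, fun h => absurd h.1 hc⟩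
      have hc' : ¬ ((pl U ∧ ¬ (pl Z ∧ ab U Z)) ↔ (pr U ∧ ¬ (pr Z ∧ ab U Z))) := by
        intro hc; exact hch (and_congr_right fun _ => hc)
      apply Finset.mem_union_right
      rw [if_pos hc']
      exact Finset.mk_mem_product (Finset.mem_singleton_self _) (mDr _ hD')
    by_cases hLZ : L = Z
    · subst hLZ
      rw [upZ pl hpl U hUZ hUW, upZ pr hsame U hUZ hUW] at hch
      have hD' : col U = false ∧ A U := by by_contra hc; exact hch ⟨fun h => absurd h.1 hc, fun h => absurd h.1 hc⟩
      have hc' : ¬ ((pl L ∧ ¬ (pl W ∧ ab W L)) ↔ (pr L ∧ ¬ (pr W ∧ ab W L))) := by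
        intro hc; exact hch (and_congr_right fun _ => hc)
      apply Finset.mem_union_left
      apply Finset.mem_union_left
      apply Finset.mem_union_left
      apply Finset.mem_union_right
      rw [if_pos hc']
      exact Finset.mk_mem_product (mAb _ hD') (Finset.mem_singleton_self _)
    by_cases hLW : L = W
    · subst hLW
      rw [upW pl hpl U hUZ hUW, upW pr hsame U hUZ hUW] at hch
      have hD' : col U = true ∧ A U := by by_contra hc; exact hch ⟨fun h => absurd h.1 hc, fun h => absurd h.1 hc⟩
      have hc' : ¬ ((pl L ∧ ¬ (pl Z ∧ ab Z L)) ↔ (pr L ∧ ¬ (pr Z ∧ ab Z L))) := by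
        intro hc; exact hch (and_congr_right fun _ => hc)
      apply Finset.mem_union_left
      apply Finset.mem_union_left
      apply Finset.mem_union_right
      rw [if_pos hc']
      exact Finset.mk_mem_product (mAr _ hD') (Finset.mem_singleton_self _)
    obtain ⟨hcol, hAU, hDL, hcc⟩ := other U L ⟨hUZ, hUW⟩ ⟨hLZ, hLW⟩ hch
    apply Finset.mem_union_left
    apply Finset.mem_union_left
    apply Finset.mem_union_left
    apply Finset.mem_union_left
    rw [if_pos hcc]
    cases hu : col U <;> cases hl : col L
    · exact absurd (hu.trans hl.symm) hcol
    · exact Finset.mem_union_left _ (Finset.mk_mem_product (mAb _ ⟨hu, hAU⟩) (mDr _ ⟨hl, hDL⟩))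
    · exact Finset.mem_union_right _ (Finset.mk_mem_product (mAr _ ⟨hu, hAU⟩) (mDb _ ⟨hl, hDL⟩))
    · exact absurd (hu.trans hl.symm) hcol
  have cardsub := Finset.card_le_card sub
  have cub : ∀ (c : Prop) [Decidable c] (s : Finset (Reg × Reg)) (k : ℕ), s.card ≤ k →
      (if c then s else ∅).card ≤ if c then k else 0 := by
    intro c _ s k h
    split_ifs
    · exact h
    · simp
  have b0 := cub ((¬ pl Z ∧ ¬ pl W ∧ (pr Z ∨ pr W)) ∨ (¬ pr Z ∧ ¬ pr W ∧ (pl Z ∨ pl W)))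
    ((Ab ×ˢ Dr) ∪ (Ar ×ˢ Db)) (Ab.card * Dr.card + Ar.card * Db.card) (by
      refine (Finset.card_union_le _ _).trans ?_
      rw [Finset.card_product, Finset.card_product])
  have b1 := cub (¬ ((pl Z ∧ ¬ (pl W ∧ ab W Z)) ↔ (pr Z ∧ ¬ (pr W ∧ ab W Z)))) (Ab ×ˢ {Z}) Ab.card (by simp)
  have b2 := cub (¬ ((pl W ∧ ¬ (pl Z ∧ ab Z W)) ↔ (pr W ∧ ¬ (pr Z ∧ ab Z W)))) (Ar ×ˢ {W}) Ar.card (by simp)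
  have b3 := cub (¬ ((pl Z ∧ ¬ (pl W ∧ ab Z W)) ↔ (pr Z ∧ ¬ (pr W ∧ ab Z W)))) ({Z} ×ˢ Db) Db.card (by simp)
  have b4 := cub (¬ ((pl W ∧ ¬ (pl Z ∧ ab W Z)) ↔ (pr W ∧ ¬ (pr Z ∧ ab W Z)))) ({W} ×ˢ Dr) Dr.card (by simp)
  have tot := cardsub.trans ((Finset.card_union_le _ _).trans (add_le_add ((Finset.card_union_le _ _).trans
    (add_le_add ((Finset.card_union_le _ _).trans (add_le_add ((Finset.card_union_le _ _).trans
    (add_le_add b0 b1)) b2)) b3)) b4))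
  have hA1 : Ab.card + Ar.card ≤ 1 := by
    rw [← Finset.card_union_of_disjoint (Finset.disjoint_left.2 fun U h1 h2 =>
      Bool.noConfusion ((Finset.mem_filter.1 h1).2.1.symm.trans (Finset.mem_filter.1 h2).2.1))]
    refine Finset.card_le_one.2 fun U hU V hV => Auniq U V ?_ ?_
    · exact (Finset.mem_union.1 hU).elim (fun h => (Finset.mem_filter.1 h).2.2) (fun h => (Finset.mem_filter.1 h).2.2)
    · exact (Finset.mem_union.1 hV).elim (fun h => (Finset.mem_filter.1 h).2.2) (fun h => (Finset.mem_filter.1 h).2.2)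
  have hD1 : Db.card + Dr.card ≤ 1 := by
    rw [← Finset.card_union_of_disjoint (Finset.disjoint_left.2 fun U h1 h2 =>
      Bool.noConfusion ((Finset.mem_filter.1 h1).2.1.symm.trans (Finset.mem_filter.1 h2).2.1))]
    refine Finset.card_le_one.2 fun U hU V hV => Duniq U V ?_ ?_
    · exact (Finset.mem_union.1 hU).elim (fun h => (Finset.mem_filter.1 h).2.2) (fun h => (Finset.mem_filter.1 h).2.2)
    · exact (Finset.mem_union.1 hV).elim (fun h => (Finset.mem_filter.1 h).2.2) (fun h => (Finset.mem_filter.1 h).2.2)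
  have ho1 : pl Z → pl W → (ab W Z ↔ ¬ ab Z W) := fun h1 h2 =>
    ⟨hasym _ _, fun h => (htotl Z W hZW h1 h2).resolve_left h⟩
  have ho2 : pr Z → pr W → (ab W Z ↔ ¬ ab Z W) := fun h1 h2 =>
    ⟨hasym _ _, fun h => (htotr Z W hZW h1 h2).resolve_left h⟩
  have B := vz_prop Ab.card Ar.card Db.card Dr.card (pl Z) (pr Z) (pl W) (pr W) (ab Z W) (ab W Z) hA1 hD1 ho1 ho2
  rw [← if_congr (nZW pl hpl) rfl rfl, ← if_congr (nZW pr hsame) rfl rfl, ← if_congr (nWZ pl hpl) rfl rfl, ← if_congr (nWZ pr hsame) rfl rfl] at B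
  refine (Nat.add_le_add_right tot 2).trans B
end Comb


section Comb
open Classical

theorem vz_sweep {Reg : Type*} [Fintype Reg] (col : Reg → Bool) (ab : Reg → Reg → Prop) (M : ℕ)
    (Z W : ℕ → Reg) (pres : ℕ → Reg → Prop)
    (hcZ : ∀ t < M, col (Z t) = true) (hcW : ∀ t < M, col (W t) = false)
    (hinj : ∀ t < M, ∀ t' < M, Z t = Z t' → W t = W t' → t = t')
    (hasym : ∀ U V, ab U V → ¬ ab V U)
    (htr : ∀ s ≤ M, ∀ U V T, pres s U → pres s V → pres s T → ab U V → ab V T → ab U T)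
    (htot : ∀ s ≤ M, ∀ U V, U ≠ V → pres s U → pres s V → ab U V ∨ ab V U)
    (hcyc : ∀ U, pres 0 U ↔ pres M U)
    (hsame : ∀ t < M, ∀ U, U ≠ Z t → U ≠ W t → (pres t U ↔ pres (t+1) U))
    (hloc : ∀ t < M, ∀ U, U ≠ Z t → U ≠ W t → pres t U →
      (ab U (Z t) ∧ ab U (W t)) ∨ (ab (Z t) U ∧ ab (W t) U))
    (habs : ∀ t < M, ∃ s ≤ M, ¬ (pres s (Z t) ∧ pres s (W t))) :
    M ≤ ∑ t ∈ Finset.range M, ((if pres t (Z t) then 0 else 1) + (if pres (t+1) (Z t) then 0 else 1)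
      + (if pres t (W t) then 0 else 1) + (if pres (t+1) (W t) then 0 else 1)) := by
  set N : ℕ → Reg × Reg → Prop := fun s P => VzN col ab (pres s) P.1 P.2 with hN
  set tch : ℕ → Reg × Reg → Prop := fun t P => P = (Z t, W t) ∨ P = (W t, Z t) with htch
  -- number of changes
  have step : ∀ t ∈ Finset.range M,
      (∑ P : Reg × Reg, (if ¬ tch t P ∧ ¬ (N t P ↔ N (t+1) P) then 1 else 0 : ℕ)) + 2 ≤
      (∑ P : Reg × Reg, (if tch t P then ((if N t P then 1 else 0) + (if N (t+1) P then 1 else 0)) else 0 : ℕ))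
      + 2 * ((if pres t (Z t) then 0 else 1) + (if pres (t+1) (Z t) then 0 else 1)
      + (if pres t (W t) then 0 else 1) + (if pres (t+1) (W t) then 0 else 1)) := by
    intro t ht
    have htM := Finset.mem_range.1 ht
    have L := vz_local col ab (pres t) (pres (t+1)) (Z t) (W t) (hcZ t htM) (hcW t htM) hasym
      (htr t htM.le) (htr (t+1) htM) (htot t htM.le) (htot (t+1) htM) (hsame t htM) (hloc t htM)
    have hne : (Z t, W t) ≠ (W t, Z t) := by
      intro h
      have h1 := congrArg Prod.fst h
      have h2 := hcZ t htM
      have h3 := hcW t htM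
      simp only at h1
      rw [h1, h3] at h2
      exact Bool.noConfusion h2
    have e1 : (∑ P : Reg × Reg, (if ¬ tch t P ∧ ¬ (N t P ↔ N (t+1) P) then 1 else 0 : ℕ)) =
        (Finset.univ.filter fun P : Reg × Reg => (P ≠ (Z t, W t) ∧ P ≠ (W t, Z t)) ∧
      ¬ (VzN col ab (pres t) P.1 P.2 ↔ VzN col ab (pres (t+1)) P.1 P.2)).card := by
      rw [Finset.card_filter]
      apply Finset.sum_congr rfl
      intro P _
      apply if_congr _ rfl rfl
      simp only [htch, hN, not_or, ne_eq]
    have e2 : (∑ P : Reg × Reg, (if tch t P then ((if N t P then 1 else 0) + (if N (t+1) P then 1 else 0)) else 0 : ℕ))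
        = ((if N t (Z t, W t) then 1 else 0) + (if N (t+1) (Z t, W t) then 1 else 0)) +
          ((if N t (W t, Z t) then 1 else 0) + (if N (t+1) (W t, Z t) then 1 else 0)) := by
      rw [← Finset.sum_filter]
      have : (Finset.univ.filter fun P : Reg × Reg => tch t P) = {(Z t, W t), (W t, Z t)} := by
        ext P; simp [htch]
      rw [this, Finset.sum_pair hne]
    rw [e1, e2]
    refine L.trans (le_of_eq ?_)
    simp only [hN]
    ring
  have S := Finset.sum_le_sum step
  rw [Finset.sum_add_distrib, Finset.sum_add_distrib, ← Finset.mul_sum, Finset.sum_comm] at S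
  rw [Finset.sum_comm (s := Finset.range M) (t := Finset.univ)] at S
  have key : ∀ P : Reg × Reg, ∑ t ∈ Finset.range M, (if tch t P then ((if N t P then 1 else 0) + (if N (t+1) P then 1 else 0)) else 0 : ℕ)
      ≤ ∑ t ∈ Finset.range M, (if ¬ tch t P ∧ ¬ (N t P ↔ N (t+1) P) then 1 else 0 : ℕ) := by
    intro P
    by_cases hP : ∃ k, k < M ∧ tch k P
    · obtain ⟨k, hk, hkP⟩ := hP
      have uniq : ∀ t < M, tch t P → t = k := by
        intro t ht h
        have c1 := hcZ t ht
        have c2 := hcW t ht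
        have c3 := hcZ k hk
        have c4 := hcW k hk
        rcases h with h | h <;> rcases hkP with h' | h' <;> rw [h] at h' <;>
          have e1 := congrArg Prod.fst h' <;> have e2 := congrArg Prod.snd h' <;> simp only at e1 e2
        · exact hinj t ht k hk e1 e2
        · rw [e1, c4] at c1; exact Bool.noConfusion c1
        · rw [e2, c4] at c1; exact Bool.noConfusion c1
        · exact hinj t ht k hk e2 e1
      obtain ⟨j, hj, hjn⟩ := habs k hk
      have hfj : ¬ N j P := by
        rintro ⟨-, p1, p2, -⟩
        rcases hkP with rfl | rfl
        · exact hjn ⟨p1, p2⟩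
        · exact hjn ⟨p2, p1⟩
      have hc0 : N 0 P ↔ N M P := by
        have : pres 0 = pres M := funext fun U => propext (hcyc U)
        simp only [hN, this]
      have := vz_seq M (fun s => N s P) hc0 k j hk hj hfj
      calc _ = (if N k P then 1 else 0) + (if N (k+1) P then 1 else 0) := by
            rw [Finset.sum_eq_single k]
            · rw [if_pos hkP]
            · intro t ht hne
              rw [if_neg fun h => hne (uniq t (Finset.mem_range.1 ht) h)]
            · intro h; exact absurd (Finset.mem_range.2 hk) h
        _ ≤ _ := this
        _ ≤ _ := by
            apply Finset.sum_le_sum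
            intro t ht
            by_cases h : t ≠ k ∧ ¬ (N t P ↔ N (t+1) P)
            · rw [if_pos h, if_pos ⟨fun h' => h.1 (uniq t (Finset.mem_range.1 ht) h'), h.2⟩]
            · rw [if_neg h]; exact Nat.zero_le _
    · push Not at hP
      rw [Finset.sum_eq_zero]
      · exact Nat.zero_le _
      · intro t ht
        rw [if_neg (hP t (Finset.mem_range.1 ht))]
  have K := Finset.sum_le_sum (fun P (_ : P ∈ (Finset.univ : Finset (Reg × Reg))) => key P)
  rw [Finset.sum_const, Finset.card_range, smul_eq_mul] at S
  omega
end Comb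


section Plane

noncomputable def vzE (x : ℝ) : ℂ := ⟨Real.cos x, Real.sin x⟩

def vzcr (z w : ℂ) : ℝ := z.re * w.im - z.im * w.re

theorem vzcr_E (ρ ρ' a b : ℝ) : vzcr (ρ • vzE a) (ρ' • vzE b) = ρ * ρ' * Real.sin (b - a) := by
  simp only [vzcr, vzE, Complex.smul_re, Complex.smul_im, smul_eq_mul, Real.sin_sub]; ring

theorem vzcr_add_right (z w w' : ℂ) : vzcr z (w + w') = vzcr z w + vzcr z w' := by
  simp only [vzcr, Complex.add_re, Complex.add_im]; ring

theorem vzcr_smul_right (z w : ℂ) (a : ℝ) : vzcr z (a • w) = a * vzcr z w := by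
  simp only [vzcr, Complex.smul_re, Complex.smul_im, smul_eq_mul]; ring

theorem vzcr_smul_left (z w : ℂ) (a : ℝ) : vzcr (a • z) w = a * vzcr z w := by
  simp only [vzcr, Complex.smul_re, Complex.smul_im, smul_eq_mul]; ring

theorem vzcr_swap (z w : ℂ) : vzcr z w = - vzcr w z := by
  simp only [vzcr]; ring

theorem vzcr_self (z : ℂ) : vzcr z z = 0 := by
  simp only [vzcr]; ring

/-- `vzcr z` as a linear map. -/
noncomputable def vzL (z : ℂ) : ℂ →ₗ[ℝ] ℝ where
  toFun w := vzcr z w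
  map_add' := vzcr_add_right z
  map_smul' a w := vzcr_smul_right z w a

theorem vzE_ne (x : ℝ) : vzE x ≠ 0 := by
  intro h
  have h1 := congrArg Complex.re h
  have h2 := congrArg Complex.im h
  simp only [vzE, Complex.zero_re, Complex.zero_im] at h1 h2
  have := Real.sin_sq_add_cos_sq x
  rw [h1, h2] at this
  norm_num at this

theorem vzE_periodic (x : ℝ) : vzE (x + 2 * Real.pi) = vzE x := by
  simp [vzE]

theorem vzE_arg (ρ x : ℝ) (hρ : 0 < ρ) (hx : x ∈ Set.Ioc (-Real.pi) Real.pi) :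
    Complex.arg (ρ • vzE x) = x := by
  refine Eq.trans (congrArg Complex.arg ?_) (Complex.arg_mul_cos_add_sin_mul_I hρ hx)
  apply Complex.ext <;> simp [vzE, ← Complex.ofReal_cos, ← Complex.ofReal_sin]

theorem vz_polar (a : ℝ) (z : ℂ) (hz : z ≠ 0) :
    ∃ ρ > 0, ∃ δ ∈ Set.Ioc (-Real.pi) Real.pi, z = (ρ : ℝ) • vzE (a + δ) := by
  set w : ℂ := ⟨Real.cos a * z.re + Real.sin a * z.im, Real.cos a * z.im - Real.sin a * z.re⟩ with hw
  have hsc := Real.sin_sq_add_cos_sq a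
  have hre : z.re = Real.cos a * w.re - Real.sin a * w.im := by
    simp only [hw]; linear_combination (-z.re) * hsc
  have him : z.im = Real.sin a * w.re + Real.cos a * w.im := by
    simp only [hw]; linear_combination (-z.im) * hsc
  have hw0 : w ≠ 0 := by
    intro h
    rw [h] at hre him
    apply hz
    apply Complex.ext <;> simp [hre, him]
  refine ⟨‖w‖, norm_pos_iff.2 hw0, Complex.arg w, Complex.arg_mem_Ioc w, ?_⟩
  have h1 : ‖w‖ * Real.cos w.arg = w.re := Complex.norm_mul_cos_arg w
  have h2 : ‖w‖ * Real.sin w.arg = w.im := Complex.norm_mul_sin_arg w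
  apply Complex.ext
  · simp only [vzE, Complex.smul_re, smul_eq_mul, Real.cos_add]
    rw [hre, ← h1, ← h2]; ring
  · simp only [vzE, Complex.smul_im, smul_eq_mul, Real.sin_add]
    rw [him, ← h1, ← h2]; ring

theorem vz_polar_pos (a : ℝ) (z : ℂ) (h : 0 < vzcr (vzE a) z) :
    ∃ ρ > 0, ∃ δ, 0 < δ ∧ δ < Real.pi ∧ z = (ρ : ℝ) • vzE (a + δ) := by
  have hz : z ≠ 0 := by rintro rfl; simp [vzcr] at h
  obtain ⟨ρ, hρ, δ, hδ, e⟩ := vz_polar a z hz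
  have h1 : vzcr (vzE a) z = ρ * Real.sin δ := by
    have := vzcr_E 1 ρ a (a + δ)
    rw [one_smul, ← e, one_mul, add_sub_cancel_left] at this
    exact this
  rw [h1] at h
  have hs : 0 < Real.sin δ := pos_of_mul_pos_right h hρ.le
  refine ⟨ρ, hρ, δ, ?_, ?_, e⟩
  · by_contra hn
    exact absurd (Real.sin_nonpos_of_nonpos_of_neg_pi_le (not_lt.1 hn) hδ.1.le) (not_le.2 hs)
  · rcases lt_or_eq_of_le hδ.2 with h | h
    · exact h
    · rw [h, Real.sin_pi] at hs; exact absurd hs (lt_irrefl _)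

theorem vz_polar_neg (a : ℝ) (z : ℂ) (h : 0 < vzcr z (vzE a)) :
    ∃ ρ > 0, ∃ δ, 0 < δ ∧ δ < Real.pi ∧ z = (ρ : ℝ) • vzE (a - δ) := by
  have hz : z ≠ 0 := by rintro rfl; simp [vzcr] at h
  obtain ⟨ρ, hρ, δ, hδ, e⟩ := vz_polar a z hz
  have h1 : vzcr z (vzE a) = - (ρ * Real.sin δ) := by
    have := vzcr_E 1 ρ a (a + δ)
    rw [one_smul, ← e, one_mul, add_sub_cancel_left] at this
    rw [vzcr_swap, this]
  rw [h1] at h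
  have hs : Real.sin δ < 0 := by
    by_contra hn
    have := mul_nonneg hρ.le (not_lt.1 hn)
    linarith
  refine ⟨ρ, hρ, -δ, ?_, ?_, by rw [sub_neg_eq_add]; exact e⟩
  · by_contra hn
    have := Real.sin_nonneg_of_nonneg_of_le_pi (show 0 ≤ δ by linarith) hδ.2
    linarith
  · linarith [hδ.1]

theorem vz_decomp (u v z : ℂ) : vzcr u v • z = vzcr z v • u + vzcr u z • v := by
  apply Complex.ext <;>
  simp only [vzcr, Complex.smul_re, Complex.smul_im, smul_eq_mul, Complex.add_re, Complex.add_im] <;> ring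

end Plane

section Cone
variable {V : Type*} [AddCommGroup V] [Module ℝ V]

def VzC (S : Finset V) (w : V) : Prop := ∃ f : V → ℝ, (∀ v, 0 ≤ f v) ∧ w = ∑ v ∈ S, f v • v

theorem VzC.add {S : Finset V} {w w' : V} (h : VzC S w) (h' : VzC S w') : VzC S (w + w') := by
  obtain ⟨f, hf, rfl⟩ := h
  obtain ⟨g, hg, rfl⟩ := h'
  exact ⟨fun v => f v + g v, fun v => add_nonneg (hf v) (hg v), by
    simp only [add_smul, Finset.sum_add_distrib]⟩

theorem VzC.smul {S : Finset V} {w : V} (h : VzC S w) {a : ℝ} (ha : 0 ≤ a) : VzC S (a • w) := by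
  obtain ⟨f, hf, rfl⟩ := h
  exact ⟨fun v => a * f v, fun v => mul_nonneg ha (hf v), by
    simp only [mul_smul, Finset.smul_sum]⟩

theorem VzC.of_mem {S : Finset V} {w : V} (h : w ∈ S) : VzC S w := by
  classical
  exact ⟨fun v => if v = w then 1 else 0, fun v => by dsimp only; split_ifs <;> norm_num, by
    simp [ite_smul, h]⟩

theorem vz_lemT (S : Finset V) (pi : V →ₗ[ℝ] ℂ) (u v : V) (hu : u ∈ S) (hv : v ∈ S) (z : ℂ)
    (h1 : 0 < vzcr (pi u) (pi v)) (h2 : 0 < vzcr (pi u) z) (h3 : 0 < vzcr z (pi v)) :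
    ∃ c, VzC S c ∧ pi c = z := by
  refine ⟨(vzcr (pi u) (pi v))⁻¹ • (vzcr z (pi v) • u + vzcr (pi u) z • v), ?_, ?_⟩
  · exact (((VzC.of_mem hu).smul h3.le).add ((VzC.of_mem hv).smul h2.le)).smul (inv_pos.2 h1).le
  · rw [map_smul, map_add, map_smul, map_smul, ← vz_decomp, smul_smul, inv_mul_cancel₀ h1.ne', one_smul]

theorem vz_lemS (S : Finset V) (pi : V →ₗ[ℝ] ℂ) (z : ℂ) (hz : z ≠ 0)
    (hnd : ∀ v ∈ S, vzcr z (pi v) ≠ 0) (h : ∃ c, VzC S c ∧ pi c = z) :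
    ∃ u ∈ S, ∃ v ∈ S, 0 < vzcr (pi u) z ∧ 0 < vzcr z (pi v) ∧ 0 < vzcr (pi u) (pi v) := by
  classical
  obtain ⟨c, ⟨f, hf, rfl⟩, hc⟩ := h
  set Sm := S.filter fun v => vzcr z (pi v) < 0
  set Sp := S.filter fun v => ¬ vzcr z (pi v) < 0
  set Lm : ℂ := ∑ v ∈ Sm, f v • pi v with hL
  set Rp : ℂ := ∑ v ∈ Sp, f v • pi v with hR
  have hsum : Lm + Rp = z := by
    rw [hL, hR, Finset.sum_filter_add_sum_filter_not, ← hc, map_sum]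
    simp only [map_smul]
  have linL : ∀ y : ℂ, ∀ T : Finset V, vzcr y (∑ v ∈ T, f v • pi v) = ∑ v ∈ T, f v * vzcr y (pi v) := by
    intro y T
    have := map_sum (vzL y) (fun v => f v • pi v) T
    simp only [map_smul, smul_eq_mul] at this
    exact this
  have hzz : vzcr z Lm + vzcr z Rp = 0 := by
    rw [← vzcr_add_right, hsum, vzcr_self]
  have hLneg : vzcr z Lm < 0 := by
    rw [hL, linL]
    by_contra hn
    have hle : ∀ v ∈ Sm, f v * vzcr z (pi v) ≤ 0 := fun v hv =>
      mul_nonpos_of_nonneg_of_nonpos (hf v) (Finset.mem_filter.1 hv).2.le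
    have h0 : ∑ v ∈ Sm, f v * vzcr z (pi v) = 0 :=
      le_antisymm (Finset.sum_nonpos hle) (not_lt.1 hn)
    have hm := (Finset.sum_eq_zero_iff_of_nonpos hle).1 h0
    have h0' : ∑ v ∈ Sp, f v * vzcr z (pi v) = 0 := by
      rw [← linL]; rw [hL, linL, h0, zero_add] at hzz; exact hzz
    have hp := (Finset.sum_eq_zero_iff_of_nonneg (fun v hv =>
      mul_nonneg (hf v) (not_lt.1 (Finset.mem_filter.1 hv).2))).1 h0'
    have hf0 : ∀ v ∈ S, f v = 0 := by
      intro v hv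
      by_cases hv' : vzcr z (pi v) < 0
      · exact (mul_eq_zero.1 (hm v (Finset.mem_filter.2 ⟨hv, hv'⟩))).resolve_right (hnd v hv)
      · exact (mul_eq_zero.1 (hp v (Finset.mem_filter.2 ⟨hv, hv'⟩))).resolve_right (hnd v hv)
    apply hz
    rw [← hc, Finset.sum_eq_zero fun v hv => by rw [hf0 v hv, zero_smul], map_zero]
  have hLR : 0 < vzcr Lm Rp := by
    have : Rp = z + (-1 : ℝ) • Lm := by rw [← hsum]; module
    rw [this, vzcr_add_right, vzcr_smul_right, vzcr_self, vzcr_swap]; linarith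
  rw [hR, linL] at hLR
  obtain ⟨v, hv, hv'⟩ := Finset.exists_lt_of_sum_lt (by simpa using hLR : ∑ v ∈ Sp, (0 : ℝ) < _)
  have hv2 : 0 < vzcr Lm (pi v) := pos_of_mul_pos_right hv' (hf v)
  rw [vzcr_swap, hL, linL, ← Finset.sum_neg_distrib] at hv2
  obtain ⟨u, hu, hu'⟩ := Finset.exists_lt_of_sum_lt (Finset.sum_const_zero.trans_lt hv2 : ∑ v ∈ Sm, (0 : ℝ) < ∑ x ∈ Sm, -(f x * vzcr (pi v) (pi x)))
  rw [← mul_neg, ← vzcr_swap] at hu'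
  have hu2 : 0 < vzcr (pi u) (pi v) := pos_of_mul_pos_right hu' (hf u)
  have a1 := Finset.mem_filter.1 hu
  have a2 := Finset.mem_filter.1 hv
  refine ⟨u, a1.1, v, a2.1, ?_, ?_, hu2⟩
  · rw [vzcr_swap]; linarith [a1.2]
  · exact lt_of_le_of_ne (not_lt.1 a2.2) (hnd v a2.1).symm

theorem vz_lemU (S : Finset V) (pi : V →ₗ[ℝ] ℂ) (a b : ℝ)
    (hnd : ∀ v ∈ S, vzcr (vzE a) (pi v) ≠ 0)
    (hno : ∀ v ∈ S, ∀ x ∈ Set.uIcc a b, ∀ ρ > 0, pi v ≠ (ρ : ℝ) • vzE x)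
    (h : ∃ c, VzC S c ∧ pi c = vzE a) : ∃ c, VzC S c ∧ pi c = vzE b := by
  obtain ⟨u, hu, v, hv, h1, h2, h3⟩ := vz_lemS S pi (vzE a) (vzE_ne a) hnd h
  obtain ⟨ρ, hρ, δ, d1, d2, eu⟩ := vz_polar_neg a _ h1
  obtain ⟨ρ', hρ', δ', d1', d2', ev⟩ := vz_polar_pos a _ h2
  have hs : δ + δ' < Real.pi := by
    by_contra hn
    rw [eu, ev, vzcr_E] at h3
    have : Real.sin (a + δ' - (a - δ)) ≤ 0 := by
      have := Real.sin_nonneg_of_nonneg_of_le_pi (x := a + δ' - (a - δ) - Real.pi) (by linarith) (by linarith)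
      rw [Real.sin_sub_pi] at this
      linarith
    have := mul_nonpos_of_nonneg_of_nonpos (mul_pos hρ hρ').le this
    linarith
  have g1 : a - δ < b := by
    by_contra hn
    refine hno u hu (a - δ) ?_ ρ hρ eu
    rw [Set.uIcc_of_ge (by linarith)]
    exact ⟨not_lt.1 hn, by linarith⟩
  have g2 : b < a + δ' := by
    by_contra hn
    refine hno v hv (a + δ') ?_ ρ' hρ' ev
    rw [Set.uIcc_of_le (by linarith)]
    exact ⟨by linarith, not_lt.1 hn⟩
  apply vz_lemT S pi u v hu hv _ h3
  · rw [eu, ← one_smul ℝ (vzE b), vzcr_E]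
    apply mul_pos (by simpa using hρ)
    apply Real.sin_pos_of_pos_of_lt_pi <;> linarith
  · rw [ev, ← one_smul ℝ (vzE b), vzcr_E]
    apply mul_pos (by simpa using hρ')
    apply Real.sin_pos_of_pos_of_lt_pi <;> linarith
end Cone


theorem vz_order {V : Type*} (Q : Finset V) (g : V → ℂ) (hg0 : ∀ q ∈ Q, g q ≠ 0)
    (hinj : ∀ p ∈ Q, ∀ q ∈ Q, (g p).arg = (g q).arg → p = q) (M : ℕ) (hQ : Q.card = M) (hM : 0 < M) :
    ∃ (q : ℕ → V) (φ θ : ℕ → ℝ), (∀ t < M, q t ∈ Q) ∧ (∀ c ∈ Q, ∃ t < M, q t = c) ∧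
      (∀ t < M, ∀ t' < M, q t = q t' → t = t') ∧ (∀ t < M, φ t < θ t ∧ θ t < φ (t+1)) ∧
      (∀ t < M, ∃ ρ > 0, g (q t) = (ρ : ℝ) • vzE (θ t)) ∧ φ M = φ 0 + 2 * Real.pi ∧
      (∀ t < M, ∀ c ∈ Q, ∀ x ∈ Set.Icc (φ t) (φ (t+1)), ∀ ρ > 0, g c = (ρ : ℝ) • vzE x →
        c = q t ∧ x = θ t) := by
  classical
  set T := Q.image fun q => (g q).arg with hT
  have hTc : T.card = M := by
    rw [hT, Finset.card_image_of_injOn, hQ]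
    intro p hp q hq h
    exact hinj p hp q hq h
  set em := T.orderEmbOfFin hTc with hem
  set θ : ℕ → ℝ := fun t => if h : t < M then em ⟨t, h⟩ else 0 with hθ
  have hθe : ∀ t (h : t < M), θ t = em ⟨t, h⟩ := fun t h => by simp only [hθ, dif_pos h]
  have hθmono : ∀ t t', t < t' → t' < M → θ t < θ t' := by
    intro t t' h h'
    rw [hθe t (h.trans h'), hθe t' h']
    exact em.strictMono h
  have hex : ∀ t, ∃ q, t < M → q ∈ Q ∧ (g q).arg = θ t := by
    intro t
    by_cases h : t < M
    · have := T.orderEmbOfFin_mem hTc ⟨t, h⟩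
      obtain ⟨q, hq, e⟩ := Finset.mem_image.1 this
      exact ⟨q, fun _ => ⟨hq, by rw [hθe t h]; exact e⟩⟩
    · have : Q.Nonempty := Finset.card_pos.1 (hQ ▸ hM)
      exact ⟨this.choose, fun h' => absurd h' h⟩
  choose q hq using hex
  have hθI : ∀ t < M, θ t ∈ Set.Ioc (-Real.pi) Real.pi := by
    intro t h
    rw [← (hq t h).2]
    exact Complex.arg_mem_Ioc _
  set φ : ℕ → ℝ := fun t => if t = 0 then (θ 0 - Real.pi) / 2 else if t = M then (θ 0 - Real.pi) / 2 + 2 * Real.pi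
    else (θ (t-1) + θ t) / 2 with hφ
  have hφ0 : φ 0 = (θ 0 - Real.pi) / 2 := by simp [hφ]
  have hφM : φ M = (θ 0 - Real.pi) / 2 + 2 * Real.pi := by simp [hφ, hM.ne']
  have hφt : ∀ t, 0 < t → t < M → φ t = (θ (t-1) + θ t) / 2 := by
    intro t h h'
    simp [hφ, h.ne', h'.ne]
  have hpi := Real.pi_pos
  have hbt : ∀ t < M, φ t < θ t ∧ θ t < φ (t+1) := by
    intro t ht
    constructor
    · rcases Nat.eq_zero_or_pos t with h | h
      · rw [h, hφ0]; linarith [(hθI 0 hM).1, (hθI 0 hM).2]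
      · rw [hφt t h ht]; linarith [hθmono (t-1) t (by omega) ht]
    · rcases Nat.lt_or_ge (t+1) M with h | h
      · rw [hφt (t+1) (by omega) h, Nat.add_sub_cancel]
        linarith [hθmono t (t+1) (by omega) h]
      · have : t + 1 = M := by omega
        rw [this, hφM]
        linarith [(hθI 0 hM).1, (hθI t ht).2]
  have hsurj : ∀ c ∈ Q, ∃ t < M, q t = c := by
    intro c hc
    have : (g c).arg ∈ Set.range em := by
      rw [hem, Finset.range_orderEmbOfFin]
      exact Finset.mem_coe.2 (Finset.mem_image_of_mem _ hc)
    obtain ⟨⟨t, ht⟩, e⟩ := this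
    refine ⟨t, ht, hinj _ (hq t ht).1 _ hc ?_⟩
    rw [(hq t ht).2, hθe t ht, e]
  have hφmono : ∀ t, t ≤ M → ∀ s, s ≤ t → φ s ≤ φ t := by
    intro t
    induction t with
    | zero => intro _ s hs; rw [Nat.le_zero.1 hs]
    | succ t ih =>
      intro ht s hs
      rcases Nat.lt_or_ge s (t+1) with h | h
      · have := hbt t ht
        have := ih (by omega) s (by omega)
        linarith
      · rw [le_antisymm hs h]
  refine ⟨q, φ, θ, fun t ht => (hq t ht).1, hsurj, ?_, hbt, ?_, by rw [hφM, hφ0], ?_⟩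
  · intro t ht t' ht' h
    have h2 : θ t = θ t' := by rw [← (hq t ht).2, ← (hq t' ht').2, h]
    rcases lt_trichotomy t t' with h' | h' | h'
    · exact absurd h2 (hθmono t t' h' ht').ne
    · exact h'
    · exact absurd h2.symm (hθmono t' t h' ht).ne
  · intro t ht
    obtain ⟨ρ, hρ, δ, hδ, e⟩ := vz_polar 0 (g (q t)) (hg0 _ (hq t ht).1)
    rw [zero_add] at e
    have := (hq t ht).2
    rw [e, vzE_arg ρ δ hρ hδ] at this
    exact ⟨ρ, hρ, this ▸ e⟩
  · intro t ht c hc x hx ρ hρ e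
    obtain ⟨j, hj, rfl⟩ := hsurj c hc
    have ha := (hq j hj).2
    have m1 := hφmono t ht.le 0 (Nat.zero_le _)
    have m2 := hφmono M le_rfl (t+1) ht
    have b0 := hbt 0 hM
    have i0 := hθI 0 hM
    rcases le_or_gt x Real.pi with h | h
    · rw [e, vzE_arg ρ x hρ ⟨by linarith [hx.1], h⟩] at ha
      have : j = t := by
        rcases lt_trichotomy j t with h' | h' | h'
        · have := (hbt j hj).2
          have := hφmono t ht.le (j+1) h'
          linarith [hx.1]
        · exact h'
        · have := (hbt j hj).1
          have := hφmono j hj.le (t+1) h'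
          linarith [hx.2]
      subst this
      exact ⟨rfl, ha⟩
    · have hx2 := hx.2
      have e' : vzE x = vzE (x - 2 * Real.pi) := by rw [← vzE_periodic (x - 2 * Real.pi)]; congr 1; ring
      rw [e, e', vzE_arg ρ _ hρ ⟨by linarith, by linarith [i0.2]⟩] at ha
      have : θ 0 ≤ θ j := by
        rcases Nat.eq_zero_or_pos j with h | h
        · rw [h]
        · exact (hθmono 0 j h hj).le
      linarith

theorem vz_evcount {Reg : Type*} [Fintype Reg] [DecidableEq Reg] (M : ℕ) (Z W : ℕ → Reg)
    (gZ gW : ℕ → Prop) [DecidablePred gZ] [DecidablePred gW] (r0 r1 : Reg) (h01 : r0 ≠ r1)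
    (hZW : ∀ t < M, ∀ t' < M, Z t ≠ W t')
    (hZ : ∀ t < M, ∀ t' < M, ¬ gZ t → ¬ gZ t' → Z t = Z t' → t = t')
    (hW : ∀ t < M, ∀ t' < M, ¬ gW t → ¬ gW t' → W t = W t' → t = t')
    (hZr : ∀ t < M, ¬ gZ t → Z t ≠ r0 ∧ Z t ≠ r1) (hWr : ∀ t < M, ¬ gW t → W t ≠ r0 ∧ W t ≠ r1) :
    ∑ t ∈ Finset.range M, (if gZ t then 0 else 1) + ∑ t ∈ Finset.range M, (if gW t then 0 else 1) + 2
      ≤ Fintype.card Reg := by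
  set A := (Finset.range M).filter fun t => ¬ gZ t with hA
  set B := (Finset.range M).filter fun t => ¬ gW t with hB
  have mA : ∀ t ∈ A, t < M ∧ ¬ gZ t := fun t h => ⟨Finset.mem_range.1 (Finset.mem_filter.1 h).1, (Finset.mem_filter.1 h).2⟩
  have mB : ∀ t ∈ B, t < M ∧ ¬ gW t := fun t h => ⟨Finset.mem_range.1 (Finset.mem_filter.1 h).1, (Finset.mem_filter.1 h).2⟩
  have e1 : ∑ t ∈ Finset.range M, (if gZ t then 0 else 1) = A.card := by
    rw [hA, Finset.card_filter]
    exact Finset.sum_congr rfl fun t _ => by by_cases h : gZ t <;> simp [h]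
  have e2 : ∑ t ∈ Finset.range M, (if gW t then 0 else 1) = B.card := by
    rw [hB, Finset.card_filter]
    exact Finset.sum_congr rfl fun t _ => by by_cases h : gW t <;> simp [h]
  rw [e1, e2]
  have f1 : (A.image Z).card = A.card := Finset.card_image_of_injOn fun t ht t' ht' h =>
    hZ t (mA t ht).1 t' (mA t' ht').1 (mA t ht).2 (mA t' ht').2 h
  have f2 : (B.image W).card = B.card := Finset.card_image_of_injOn fun t ht t' ht' h =>
    hW t (mB t ht).1 t' (mB t' ht').1 (mB t ht).2 (mB t' ht').2 h
  have d1 : Disjoint (A.image Z) (B.image W) := by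
    rw [Finset.disjoint_left]
    intro r h h'
    obtain ⟨t, ht, rfl⟩ := Finset.mem_image.1 h
    obtain ⟨t', ht', e⟩ := Finset.mem_image.1 h'
    exact hZW t (mA t ht).1 t' (mB t' ht').1 e.symm
  have d2 : Disjoint (A.image Z ∪ B.image W) {r0, r1} := by
    rw [Finset.disjoint_left]
    intro r h h'
    rcases Finset.mem_union.1 h with h | h
    · obtain ⟨t, ht, rfl⟩ := Finset.mem_image.1 h
      have := hZr t (mA t ht).1 (mA t ht).2
      rw [Finset.mem_insert, Finset.mem_singleton] at h'
      exact h'.elim this.1 this.2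
    · obtain ⟨t, ht, rfl⟩ := Finset.mem_image.1 h
      have := hWr t (mB t ht).1 (mB t ht).2
      rw [Finset.mem_insert, Finset.mem_singleton] at h'
      exact h'.elim this.1 this.2
  rw [← f1, ← f2, ← Finset.card_union_of_disjoint d1, ← Finset.card_pair h01, ← Finset.card_union_of_disjoint d2]
  exact Finset.card_le_univ _


section Cfg
open Classical

structure VzCfg {V Reg : Type*} [AddCommGroup V] [Module ℝ V] (K : Reg → Finset V) (Q : Finset V)
    (Zf Wf : V → Reg) (col : Reg → Bool) (r0 r1 : Reg) : Prop where
  qZ : ∀ q ∈ Q, q ∈ K (Zf q)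
  qW : ∀ q ∈ Q, q ∈ K (Wf q)
  cZ : ∀ q ∈ Q, col (Zf q) = true
  cW : ∀ q ∈ Q, col (Wf q) = false
  corner : ∀ r, ∀ c ∈ K r, c ∈ Q ∧ (r = Zf c ∨ r = Wf c)
  neg : ∀ q ∈ Q, -q ∈ Q
  h0 : ∀ r w1 w2, VzC (K r) w1 → VzC (K r) w2 → w1 + w2 = 0 → w1 = 0
  hI : ∀ r r' w, r ≠ r' → VzC (K r) w → VzC (K r') w → w ≠ 0 → ∃ q ∈ Q, ∃ l > 0, w = (l : ℝ) • q ∧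
    ((r = Zf q ∧ r' = Wf q) ∨ (r = Wf q ∧ r' = Zf q))
  hX : ∀ q ∈ Q, ∀ r, (r = Zf q ∨ r = Wf q) → ∀ w1 w2 (l : ℝ), VzC (K r) w1 → VzC (K r) w2 →
    w1 + w2 = l • q → ∃ m : ℝ, w1 = m • q
  hinj : ∀ q ∈ Q, ∀ q' ∈ Q, Zf q = Zf q' → Wf q = Wf q' → q = q'
  c0 : col r0 = true
  c1 : col r1 = false
  np : ∀ q ∈ Q, ¬ (Zf q = r0 ∧ Wf q = r1)

structure VzPi {V Reg : Type*} [AddCommGroup V] [Module ℝ V] (K : Reg → Finset V) (Q : Finset V)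
    (r0 r1 : Reg) (N : V) (pi : V →ₗ[ℝ] ℂ) : Prop where
  ker : ∀ v, pi v = 0 → ∃ k : ℝ, v = k • N
  piN : pi N = 0
  N0 : N ≠ 0
  gen : ∀ p ∈ Q, ∀ q ∈ Q, vzcr (pi p) (pi q) = 0 → q = p ∨ q = -p
  qne : ∀ q ∈ Q, pi q ≠ 0
  n0 : VzC (K r0) N
  n1 : VzC (K r1) (-N)
  polp : ∀ r, (r = r0 ∨ r = r1) → ∀ q ∈ K r, ∃ c ∈ K r, 0 < vzcr (pi q) (pi c)
  poln : ∀ r, (r = r0 ∨ r = r1) → ∀ q ∈ K r, ∃ c ∈ K r, 0 < vzcr (pi c) (pi q)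

def VzAb {V Reg : Type*} [AddCommGroup V] [Module ℝ V] (K : Reg → Finset V) (N : V)
    (pi : V →ₗ[ℝ] ℂ) (U T : Reg) : Prop :=
  U ≠ T ∧ ∃ c c', ∃ k : ℝ, VzC (K U) c ∧ VzC (K T) c' ∧ 0 < k ∧ c - c' = k • N ∧ pi c ≠ 0

theorem VzAb_asym {V Reg : Type*} [AddCommGroup V] [Module ℝ V] {K : Reg → Finset V} {Q : Finset V}
    {Zf Wf : V → Reg} {col : Reg → Bool} {r0 r1 : Reg} {N : V} {pi : V →ₗ[ℝ] ℂ}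
    (H : VzCfg K Q Zf Wf col r0 r1) (P : VzPi K Q r0 r1 N pi) (U T : Reg) (h : VzAb K N pi U T) :
    ¬ VzAb K N pi T U := by
  rintro ⟨-, d', d, k2, hd', hd, hk2, e2, -⟩
  obtain ⟨hne, c, c', k1, hc, hc', hk1, e1, hpc⟩ := h
  have ew : k2 • c + k1 • d = k2 • c' + k1 • d' := by
    have : k2 • (c - c') = k1 • (d' - d) := by rw [e1, e2, smul_smul, smul_smul, mul_comm]
    rw [smul_sub, smul_sub] at this
    rw [← sub_eq_zero] at this ⊢
    rw [← this]; abel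
  have hw0 : k2 • c + k1 • d ≠ 0 := by
    intro h
    have := H.h0 U _ _ (hc.smul hk2.le) (hd.smul hk1.le) h
    rw [smul_eq_zero] at this
    rcases this with h | h
    · exact hk2.ne' h
    · rw [h, map_zero] at hpc; exact hpc rfl
  have hU : VzC (K U) (k2 • c + k1 • d) := (hc.smul hk2.le).add (hd.smul hk1.le)
  have hT : VzC (K T) (k2 • c + k1 • d) := by
    rw [ew]; exact (hc'.smul hk2.le).add (hd'.smul hk1.le)
  obtain ⟨q, hq, l, hl, e, hor⟩ := H.hI U T _ hne hU hT hw0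
  obtain ⟨m, hm⟩ := H.hX q hq U (by tauto) _ _ l (hc.smul hk2.le) (hd.smul hk1.le) e
  obtain ⟨m', hm'⟩ := H.hX q hq T (by tauto) _ _ l (hc'.smul hk2.le) (hd'.smul hk1.le) (by rw [← ew, e])
  have e3 : (k2 * k1) • N = (m - m') • q := by
    rw [mul_smul, ← e1, smul_sub, hm, hm', sub_smul]
  have e4 := congrArg pi e3
  rw [map_smul, map_smul, P.piN, smul_zero] at e4
  rcases smul_eq_zero.1 e4.symm with h | h
  · rw [h, zero_smul] at e3
    rcases smul_eq_zero.1 e3 with h | h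
    · exact (mul_pos hk2 hk1).ne' h
    · exact P.N0 h
  · exact P.qne q hq h

/-- Comparison of two points over a common nonzero image. -/
theorem VzAb_of {V Reg : Type*} [AddCommGroup V] [Module ℝ V] {K : Reg → Finset V} {Q : Finset V}
    {r0 r1 : Reg} {N : V} {pi : V →ₗ[ℝ] ℂ}
    (P : VzPi K Q r0 r1 N pi) (U T : Reg) (hne : U ≠ T) (c c' : V) (hc : VzC (K U) c) (hc' : VzC (K T) c')
    (hpi : pi c = pi c') (hz : pi c ≠ 0) :
    ∃ k : ℝ, c - c' = k • N ∧ (0 < k → VzAb K N pi U T) ∧ (k < 0 → VzAb K N pi T U) := by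
  obtain ⟨k, hk⟩ := P.ker (c - c') (by rw [map_sub, hpi, sub_self])
  refine ⟨k, hk, fun h => ⟨hne, c, c', k, hc, hc', h, hk, hz⟩, fun h => ⟨hne.symm, c', c, -k, hc', hc, by linarith, ?_, by rwa [← hpi]⟩⟩
  rw [neg_smul, ← hk, neg_sub]

theorem vz_nopole {V Reg : Type*} [AddCommGroup V] [Module ℝ V] {K : Reg → Finset V} {Q : Finset V}
    {Zf Wf : V → Reg} {col : Reg → Bool} {r0 r1 : Reg} {N : V} {pi : V →ₗ[ℝ] ℂ}
    (H : VzCfg K Q Zf Wf col r0 r1) (P : VzPi K Q r0 r1 N pi) (r : Reg) (hr0 : r ≠ r0) (hr1 : r ≠ r1)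
    (k : ℝ) (h : VzC (K r) (k • N)) : k = 0 := by
  by_contra hk
  have hne : k • N ≠ 0 := smul_ne_zero hk P.N0
  have : ∃ q ∈ Q, ∃ l > 0, k • N = (l : ℝ) • q := by
    rcases lt_or_gt_of_ne hk with h' | h'
    · have h2 : VzC (K r1) (k • N) := by
        have := P.n1.smul (show (0:ℝ) ≤ -k by linarith)
        rwa [smul_neg, neg_smul, neg_neg] at this
      obtain ⟨q, hq, l, hl, e, -⟩ := H.hI r r1 _ hr1 h h2 hne
      exact ⟨q, hq, l, hl, e⟩
    · obtain ⟨q, hq, l, hl, e, -⟩ := H.hI r r0 _ hr0 h (P.n0.smul h'.le) hne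
      exact ⟨q, hq, l, hl, e⟩
  obtain ⟨q, hq, l, hl, e⟩ := this
  have e4 := congrArg pi e
  rw [map_smul, map_smul, P.piN, smul_zero] at e4
  exact (smul_ne_zero hl.ne' (P.qne q hq)) e4.symm

end Cfg


section Cfg
open Classical

theorem vz_main {V Reg : Type*} [AddCommGroup V] [Module ℝ V] [Fintype Reg] {K : Reg → Finset V} {Q : Finset V}
    {Zf Wf : V → Reg} {col : Reg → Bool} {r0 r1 : Reg} {N : V} {pi : V →ₗ[ℝ] ℂ}
    (H : VzCfg K Q Zf Wf col r0 r1) (P : VzPi K Q r0 r1 N pi) :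
    Q.card + 4 ≤ 2 * Fintype.card Reg := by
  have h01 : r0 ≠ r1 := by
    rintro rfl
    have := H.c0.symm.trans H.c1
    exact Bool.noConfusion this
  have hq0 : ∀ q ∈ Q, q ≠ 0 := fun q hq h => P.qne q hq (by rw [h, map_zero])
  have hqneg : ∀ r q, q ∈ K r → -q ∈ K r → False := by
    intro r q h1 h2
    exact hq0 q (H.corner r q h1).1 (H.h0 r q (-q) (.of_mem h1) (.of_mem h2) (add_neg_cancel q))
  rcases Nat.eq_zero_or_pos Q.card with hM | hM
  · have : 2 ≤ Fintype.card Reg := by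
      rw [← Finset.card_pair h01]; exact Finset.card_le_univ _
    omega
  obtain ⟨M, hQ⟩ : ∃ M, Q.card = M := ⟨_, rfl⟩
  rw [hQ] at hM ⊢
  have hargI : ∀ p ∈ Q, ∀ q ∈ Q, (pi p).arg = (pi q).arg → p = q := by
    intro p hp q hq h
    obtain ⟨ρ, hρ, δ, hδ, e⟩ := vz_polar 0 (pi p) (P.qne p hp)
    obtain ⟨ρ', hρ', δ', hδ', e'⟩ := vz_polar 0 (pi q) (P.qne q hq)
    rw [zero_add] at e e'
    rw [e, e', vzE_arg _ _ hρ hδ, vzE_arg _ _ hρ' hδ'] at h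
    rw [h] at e
    rcases P.gen p hp q hq (by rw [e, e', vzcr_E, sub_self, Real.sin_zero, mul_zero]) with h1 | h1
    · exact h1.symm
    · exfalso
      rw [h1, map_neg, e, ← neg_smul] at e'
      have : ((-ρ) - ρ') • vzE δ' = 0 := by rw [sub_smul, e', sub_self]
      rcases smul_eq_zero.1 this with h | h
      · linarith
      · exact vzE_ne _ h
  obtain ⟨q, φ, θ, hqQ, hsurj, hqinj, hφθ, hqθ, hφM, hloc⟩ := vz_order Q pi P.qne hargI M hQ hM
  have hcQ : ∀ r, ∀ c ∈ K r, c ∈ Q := fun r c hc => (H.corner r c hc).1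
  -- slots are nondegenerate
  have hray : ∀ s ≤ M, ∀ c ∈ Q, ∀ ρ > 0, pi c ≠ (ρ : ℝ) • vzE (φ s) := by
    intro s hs c hc ρ hρ e
    rcases Nat.lt_or_ge s M with h | h
    · have b := hφθ s h
      have := (hloc s h c hc (φ s) ⟨le_rfl, by linarith⟩ ρ hρ e).2
      linarith
    · have hs' : s = (M - 1) + 1 := by omega
      have b := hφθ (M-1) (by omega)
      rw [hs'] at e
      have := (hloc (M-1) (by omega) c hc (φ (M-1+1)) ⟨by linarith, le_rfl⟩ ρ hρ e).2
      linarith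
  have hnd : ∀ s ≤ M, ∀ c ∈ Q, vzcr (vzE (φ s)) (pi c) ≠ 0 := by
    intro s hs c hc h
    obtain ⟨ρ, hρ, δ, hδ, e⟩ := vz_polar (φ s) (pi c) (P.qne c hc)
    have h1 : vzcr (vzE (φ s)) (pi c) = ρ * Real.sin δ := by
      have := vzcr_E 1 ρ (φ s) (φ s + δ)
      rw [one_smul, ← e, one_mul, add_sub_cancel_left] at this
      exact this
    rw [h1] at h
    have hs0 := (mul_eq_zero.1 h).resolve_left hρ.ne'
    rcases lt_trichotomy δ 0 with hd | hd | hd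
    · exact absurd hs0 (Real.sin_neg_of_neg_of_neg_pi_lt hd hδ.1).ne
    · rw [hd, add_zero] at e; exact hray s hs c hc ρ hρ e
    · rcases lt_or_eq_of_le hδ.2 with hp | hp
      · exact absurd hs0 (Real.sin_pos_of_pos_of_lt_pi hd hp).ne'
      · apply hray s hs (-c) (H.neg c hc) ρ hρ
        rw [map_neg, e, hp, ← smul_neg]
        congr 1
        apply Complex.ext <;> simp [vzE]
  set pres : ℕ → Reg → Prop := fun s r => ∃ c, VzC (K r) c ∧ pi c = vzE (φ s) with hpres
  have hF : ∀ t < M, ∀ r, q t ∉ K r → (pres t r ∨ pres (t+1) r) → ∀ x ∈ Set.Icc (φ t) (φ (t+1)),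
      ∃ c, VzC (K r) c ∧ pi c = vzE x := by
    intro t ht r hr hp x hx
    have no : ∀ v ∈ K r, ∀ y ∈ Set.Icc (φ t) (φ (t+1)), ∀ ρ > 0, pi v ≠ (ρ : ℝ) • vzE y := by
      intro v hv y hy ρ hρ e
      have := (hloc t ht v (hcQ r v hv) y hy ρ hρ e).1
      exact hr (this ▸ hv)
    have hb := hφθ t ht
    rcases hp with hp | hp
    · refine vz_lemU (K r) pi (φ t) x (fun v hv => hnd t ht.le v (hcQ r v hv)) ?_ hp
      intro v hv y hy
      rw [Set.uIcc_of_le hx.1] at hy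
      exact no v hv y ⟨hy.1, hy.2.trans hx.2⟩
    · refine vz_lemU (K r) pi (φ (t+1)) x (fun v hv => hnd (t+1) ht v (hcQ r v hv)) ?_ hp
      intro v hv y hy
      rw [Set.uIcc_of_ge hx.2] at hy
      exact no v hv y ⟨hx.1.trans hy.1, hy.2⟩
  have hKt : ∀ t < M, ∀ U, U ≠ Zf (q t) → U ≠ Wf (q t) → q t ∉ K U := by
    intro t ht U h1 h2 h
    exact (H.corner U (q t) h).2.elim h1 h2
  have hcol : ∀ t < M, ∀ t' < M, Zf (q t) ≠ Wf (q t') := by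
    intro t ht t' ht' h
    have := H.cZ _ (hqQ t ht)
    rw [h, H.cW _ (hqQ t' ht')] at this
    exact Bool.noConfusion this
  have hasym := VzAb_asym H P
  -- comparison over a slot
  have hcmp : ∀ s ≤ M, ∀ U T, U ≠ T → ∀ c c', VzC (K U) c → VzC (K T) c' → pi c = vzE (φ s) → pi c' = vzE (φ s) →
      ∃ k : ℝ, k ≠ 0 ∧ c - c' = k • N ∧ (0 < k → VzAb K N pi U T) ∧ (k < 0 → VzAb K N pi T U) := by
    intro s hs U T hne c c' hc hc' e e'
    obtain ⟨k, hk, h1, h2⟩ := VzAb_of P U T hne c c' hc hc' (e.trans e'.symm) (by rw [e]; exact vzE_ne _)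
    refine ⟨k, ?_, hk, h1, h2⟩
    rintro rfl
    rw [zero_smul, sub_eq_zero] at hk
    have hc0 : c ≠ 0 := by rintro rfl; rw [map_zero] at e; exact vzE_ne _ e.symm
    obtain ⟨p, hp, l, hl, ep, -⟩ := H.hI U T c hne hc (hk ▸ hc') hc0
    apply hray s hs p hp l⁻¹ (inv_pos.2 hl)
    rw [← e, ep, map_smul, smul_smul, inv_mul_cancel₀ hl.ne', one_smul]
  have sweep := vz_sweep col (VzAb K N pi) M (fun t => Zf (q t)) (fun t => Wf (q t)) pres
    (fun t ht => H.cZ _ (hqQ t ht)) (fun t ht => H.cW _ (hqQ t ht))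
    (fun t ht t' ht' h1 h2 => hqinj t ht t' ht' (H.hinj _ (hqQ t ht) _ (hqQ t' ht') h1 h2))
    hasym ?_ ?_ ?_ ?_ ?_ ?_
  rotate_left
  · -- transitivity
    rintro s hs U T R ⟨c, hc, e⟩ ⟨c', hc', e'⟩ ⟨c'', hc'', e''⟩ h1 h2
    have hne : U ≠ R := by rintro rfl; exact hasym _ _ h1 h2
    obtain ⟨k, -, hk, -, hk2⟩ := hcmp s hs U T h1.1 c c' hc hc' e e'
    obtain ⟨l, -, hl, -, hl2⟩ := hcmp s hs T R h2.1 c' c'' hc' hc'' e' e''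
    have hk0 : 0 ≤ k := by by_contra h; exact hasym _ _ h1 (hk2 (not_le.1 h))
    have hl0 : 0 ≤ l := by by_contra h; exact hasym _ _ h2 (hl2 (not_le.1 h))
    obtain ⟨m, hm0, hm, hm1, -⟩ := hcmp s hs U R hne c c'' hc hc'' e e''
    have : m • N = (k + l) • N := by
      rw [add_smul, ← hk, ← hl, ← hm]; abel
    have hmk : m = k + l := smul_left_injective ℝ P.N0 this
    exact hm1 (lt_of_le_of_ne (by rw [hmk]; positivity) hm0.symm)
  · rintro s hs U T hne ⟨c, hc, e⟩ ⟨c', hc', e'⟩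
    obtain ⟨k, k0, -, h1, h2⟩ := hcmp s hs U T hne c c' hc hc' e e'
    rcases lt_or_gt_of_ne k0 with h | h
    · exact Or.inr (h2 h)
    · exact Or.inl (h1 h)
  · intro U
    simp only [hpres, hφM, vzE_periodic]
  · intro t ht U h1 h2
    have hb := hφθ t ht
    exact ⟨fun h => hF t ht U (hKt t ht U h1 h2) (Or.inl h) _ ⟨by linarith, le_rfl⟩,
      fun h => hF t ht U (hKt t ht U h1 h2) (Or.inr h) _ ⟨le_rfl, by linarith⟩⟩
  · intro t ht U h1 h2 hp
    have hb := hφθ t ht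
    obtain ⟨c, hc, e⟩ := hF t ht U (hKt t ht U h1 h2) (Or.inl hp) (θ t) ⟨hb.1.le, hb.2.le⟩
    obtain ⟨ρ, hρ, eq⟩ := hqθ t ht
    have e' : pi (ρ⁻¹ • q t) = vzE (θ t) := by
      rw [map_smul, eq, smul_smul, inv_mul_cancel₀ hρ.ne', one_smul]
    have hcZ : VzC (K (Zf (q t))) (ρ⁻¹ • q t) := (VzC.of_mem (H.qZ _ (hqQ t ht))).smul (inv_pos.2 hρ).le
    have hcW : VzC (K (Wf (q t))) (ρ⁻¹ • q t) := (VzC.of_mem (H.qW _ (hqQ t ht))).smul (inv_pos.2 hρ).le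
    have hz : pi c ≠ 0 := by rw [e]; exact vzE_ne _
    obtain ⟨k, hk, a1, a2⟩ := VzAb_of P U (Zf (q t)) h1 c _ hc hcZ (e.trans e'.symm) hz
    obtain ⟨k', hk', a1', a2'⟩ := VzAb_of P U (Wf (q t)) h2 c _ hc hcW (e.trans e'.symm) hz
    have hkk : k = k' := smul_left_injective ℝ P.N0 (hk.symm.trans hk')
    have hk0 : k ≠ 0 := by
      rintro rfl
      rw [zero_smul, sub_eq_zero] at hk
      have hc0 : c ≠ 0 := by rintro rfl; rw [map_zero] at hz; exact hz rfl
      obtain ⟨p, hp, l, hl, ep, hor⟩ := H.hI U _ c h1 hc (hk ▸ hcZ) hc0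
      have : p = q t := by
        refine (hloc t ht p hp (θ t) ⟨hb.1.le, hb.2.le⟩ l⁻¹ (inv_pos.2 hl) ?_).1
        rw [← e, ep, map_smul, smul_smul, inv_mul_cancel₀ hl.ne', one_smul]
      rw [this] at hor
      rcases hor with h | h
      · exact h1 h.1
      · exact h2 h.1
    subst hkk
    rcases lt_or_gt_of_ne hk0 with h | h
    · exact Or.inr ⟨a2 h, a2' h⟩
    · exact Or.inl ⟨a1 h, a1' h⟩
  · -- absence
    intro t ht
    obtain ⟨t', ht', et'⟩ := hsurj (-(q t)) (H.neg _ (hqQ t ht))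
    refine ⟨t', ht'.le, ?_⟩
    have main : ∀ r, q t ∈ K r → r ≠ r0 → r ≠ r1 → ¬ pres t' r := by
      intro r hr n0 n1 hp
      have hnot : q t' ∉ K r := by rw [et']; exact hqneg r _ hr
      have hb := hφθ t' ht'
      obtain ⟨c, hc, e⟩ := hF t' ht' r hnot (Or.inl hp) (θ t') ⟨hb.1.le, hb.2.le⟩
      obtain ⟨ρ, hρ, eq⟩ := hqθ t' ht'
      have hcq : VzC (K r) (ρ⁻¹ • q t) := (VzC.of_mem hr).smul (inv_pos.2 hρ).le
      have e0 : pi (c + ρ⁻¹ • q t) = 0 := by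
        have : q t = - q t' := by rw [et', neg_neg]
        rw [map_add, e, map_smul, this, map_neg, eq, smul_neg, smul_smul, inv_mul_cancel₀ hρ.ne', one_smul, add_neg_cancel]
      obtain ⟨k, hk⟩ := P.ker _ e0
      have hk0 := vz_nopole H P r n0 n1 k (hk ▸ hc.add hcq)
      rw [hk0, zero_smul] at hk
      have := H.h0 r c _ hc hcq hk
      rw [this, map_zero] at e
      exact vzE_ne _ e.symm
    have zr1 : Zf (q t) ≠ r1 := by
      intro h
      have := H.cZ _ (hqQ t ht)
      rw [h, H.c1] at this
      exact Bool.noConfusion this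
    have wr0 : Wf (q t) ≠ r0 := by
      intro h
      have := H.cW _ (hqQ t ht)
      rw [h, H.c0] at this
      exact Bool.noConfusion this
    rintro ⟨p1, p2⟩
    by_cases hz : Zf (q t) = r0
    · exact main _ (H.qW _ (hqQ t ht)) wr0 (fun h => H.np _ (hqQ t ht) ⟨hz, h⟩) p2
    · exact main _ (H.qZ _ (hqQ t ht)) hz zr1 p1
  -- events
  have evR : ∀ t < M, ∀ r, q t ∈ K r → ∀ c ∈ K r, 0 < vzcr (pi (q t)) (pi c) → pres (t+1) r := by
    intro t ht r hr c hc hpos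
    obtain ⟨ρ, hρ, eq⟩ := hqθ t ht
    have hb := hφθ t ht
    have hpos' : 0 < vzcr (vzE (θ t)) (pi c) := by
      rw [eq, vzcr_smul_left] at hpos
      exact pos_of_mul_pos_right hpos hρ.le
    obtain ⟨ρ', hρ', δ, d1, d2, ec⟩ := vz_polar_pos _ _ hpos'
    have hlt : φ (t+1) < θ t + δ := by
      by_contra hn
      have := (hloc t ht c (hcQ r c hc) (θ t + δ) ⟨by linarith, not_lt.1 hn⟩ ρ' hρ' ec).2
      linarith
    apply vz_lemT (K r) pi (q t) c hr hc _ hpos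
    · rw [eq, ← one_smul ℝ (vzE (φ (t+1))), vzcr_E]
      apply mul_pos (by simpa using hρ)
      apply Real.sin_pos_of_pos_of_lt_pi <;> linarith
    · rw [ec, ← one_smul ℝ (vzE (φ (t+1))), vzcr_E]
      apply mul_pos (by simpa using hρ')
      apply Real.sin_pos_of_pos_of_lt_pi <;> linarith
  have evL : ∀ t < M, ∀ r, q t ∈ K r → ∀ c ∈ K r, 0 < vzcr (pi c) (pi (q t)) → pres t r := by
    intro t ht r hr c hc hpos
    obtain ⟨ρ, hρ, eq⟩ := hqθ t ht
    have hb := hφθ t ht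
    have hpos' : 0 < vzcr (pi c) (vzE (θ t)) := by
      rw [eq, vzcr_smul_right] at hpos
      exact pos_of_mul_pos_right hpos hρ.le
    obtain ⟨ρ', hρ', δ, d1, d2, ec⟩ := vz_polar_neg _ _ hpos'
    have hlt : θ t - δ < φ t := by
      by_contra hn
      have := (hloc t ht c (hcQ r c hc) (θ t - δ) ⟨not_lt.1 hn, by linarith⟩ ρ' hρ' ec).2
      linarith
    apply vz_lemT (K r) pi c (q t) hc hr _ hpos
    · rw [ec, ← one_smul ℝ (vzE (φ t)), vzcr_E]
      apply mul_pos (by simpa using hρ')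
      apply Real.sin_pos_of_pos_of_lt_pi <;> linarith
    · rw [eq, ← one_smul ℝ (vzE (φ t)), vzcr_E]
      apply mul_pos (by simpa using hρ)
      apply Real.sin_pos_of_pos_of_lt_pi <;> linarith
  have uniq : ∀ t < M, ∀ t' < M, ∀ r, q t ∈ K r → q t' ∈ K r → vzcr (pi (q t)) (pi (q t')) ≤ 0 →
      vzcr (pi (q t')) (pi (q t)) ≤ 0 → t = t' := by
    intro t ht t' ht' r h1 h2 a b
    rw [vzcr_swap] at b
    rcases P.gen _ (hqQ t ht) _ (hqQ t' ht') (le_antisymm a (by linarith)) with h | h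
    · exact (hqinj t' ht' t ht h).symm
    · exact (hqneg r _ h1 (h ▸ h2)).elim
  have uR : ∀ t < M, ∀ t' < M, ∀ r, q t ∈ K r → q t' ∈ K r → ¬ pres (t+1) r → ¬ pres (t'+1) r → t = t' := by
    intro t ht t' ht' r h1 h2 a b
    refine uniq t ht t' ht' r h1 h2 ?_ ?_
    · by_contra h; exact a (evR t ht r h1 _ h2 (not_le.1 h))
    · by_contra h; exact b (evR t' ht' r h2 _ h1 (not_le.1 h))
  have uL : ∀ t < M, ∀ t' < M, ∀ r, q t ∈ K r → q t' ∈ K r → ¬ pres t r → ¬ pres t' r → t = t' := by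
    intro t ht t' ht' r h1 h2 a b
    refine uniq t ht t' ht' r h1 h2 ?_ ?_
    · by_contra h; exact b (evL t' ht' r h2 _ h1 (not_le.1 h))
    · by_contra h; exact a (evL t ht r h1 _ h2 (not_le.1 h))
  have pR : ∀ t < M, ∀ r, q t ∈ K r → ¬ pres (t+1) r → r ≠ r0 ∧ r ≠ r1 := by
    intro t ht r h1 a
    by_contra h
    obtain ⟨c, hc, hp⟩ := P.polp r (by tauto) _ h1
    exact a (evR t ht r h1 c hc hp)
  have pL : ∀ t < M, ∀ r, q t ∈ K r → ¬ pres t r → r ≠ r0 ∧ r ≠ r1 := by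
    intro t ht r h1 a
    by_contra h
    obtain ⟨c, hc, hp⟩ := P.poln r (by tauto) _ h1
    exact a (evL t ht r h1 c hc hp)
  have kZ : ∀ t < M, q t ∈ K (Zf (q t)) := fun t ht => H.qZ _ (hqQ t ht)
  have kW : ∀ t < M, q t ∈ K (Wf (q t)) := fun t ht => H.qW _ (hqQ t ht)
  have cR := vz_evcount M (fun t => Zf (q t)) (fun t => Wf (q t)) (fun t => pres (t+1) (Zf (q t)))
    (fun t => pres (t+1) (Wf (q t))) r0 r1 h01 hcol
    (fun t ht t' ht' a b e => uR t ht t' ht' _ (kZ t ht) (e ▸ kZ t' ht') a (e ▸ b))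
    (fun t ht t' ht' a b e => uR t ht t' ht' _ (kW t ht) (e ▸ kW t' ht') a (e ▸ b))
    (fun t ht a => pR t ht _ (kZ t ht) a) (fun t ht a => pR t ht _ (kW t ht) a)
  have cL := vz_evcount M (fun t => Zf (q t)) (fun t => Wf (q t)) (fun t => pres t (Zf (q t)))
    (fun t => pres t (Wf (q t))) r0 r1 h01 hcol
    (fun t ht t' ht' a b e => uL t ht t' ht' _ (kZ t ht) (e ▸ kZ t' ht') a (e ▸ b))
    (fun t ht t' ht' a b e => uL t ht t' ht' _ (kW t ht) (e ▸ kW t' ht') a (e ▸ b))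
    (fun t ht a => pL t ht _ (kZ t ht) a) (fun t ht a => pL t ht _ (kW t ht) a)
  simp only [Finset.sum_add_distrib] at sweep
  omega

end Cfg


section Cfg
open Classical

theorem vz_signs (t a b c : ℝ) (ht : 0 < t) (h : a + t * b + t ^ 2 * c = 0) (hn : a ≠ 0 ∨ b ≠ 0 ∨ c ≠ 0) :
    (0 < a ∨ 0 < b ∨ 0 < c) ∧ (a < 0 ∨ b < 0 ∨ c < 0) := by
  have ht2 : 0 < t ^ 2 := by positivity
  have aux : ∀ a b c : ℝ, a + t * b + t ^ 2 * c = 0 → (a ≠ 0 ∨ b ≠ 0 ∨ c ≠ 0) → (0 < a ∨ 0 < b ∨ 0 < c) := by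
    intro a b c h hn
    by_contra hcon
    push Not at hcon
    obtain ⟨h1, h2, h3⟩ := hcon
    have e2 : t * b ≤ 0 := mul_nonpos_of_nonneg_of_nonpos ht.le h2
    have e3 : t ^ 2 * c ≤ 0 := mul_nonpos_of_nonneg_of_nonpos ht2.le h3
    have f1 : a = 0 := by linarith
    have f2 : t * b = 0 := by linarith
    have f3 : t ^ 2 * c = 0 := by linarith
    rcases hn with h | h | h
    · exact h f1
    · exact h ((mul_eq_zero.1 f2).resolve_left ht.ne')
    · exact h ((mul_eq_zero.1 f3).resolve_left ht2.ne')
  refine ⟨aux a b c h hn, ?_⟩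
  have := aux (-a) (-b) (-c) (by linarith) (by simpa using hn)
  simpa using this

theorem vz_pole {V : Type*} [AddCommGroup V] [Module ℝ V] (hdim : Module.finrank ℝ V = 3)
    (Q : Finset V) (u v w : V) (hli : LinearIndependent ℝ ![u, v, w]) :
    ∃ t : ℝ, 0 < t ∧ ∀ p ∈ Q, ∀ q ∈ Q, u + t • v + t ^ 2 • w ∉ Submodule.span ℝ {p, q} := by
  haveI : FiniteDimensional ℝ V := Module.finite_of_finrank_pos (by rw [hdim]; norm_num)
  have key : ∀ p q : V, {t : ℝ | u + t • v + t ^ 2 • w ∈ Submodule.span ℝ {p, q}}.Finite := by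
    intro p q
    have hlt : Submodule.span ℝ {p, q} < ⊤ := by
      rw [lt_top_iff_ne_top]
      intro h
      have h1 : Module.finrank ℝ (Submodule.span ℝ (({p, q} : Finset V) : Set V)) ≤ ({p, q} : Finset V).card :=
        finrank_span_finset_le_card _
      rw [Finset.coe_insert, Finset.coe_singleton, h, finrank_top, hdim] at h1
      have := Finset.card_le_two (a := p) (b := q)
      omega
    obtain ⟨f, hf, hle⟩ := Submodule.exists_le_ker_of_lt_top _ hlt
    set P : Polynomial ℝ := Polynomial.C (f u) + Polynomial.C (f v) * Polynomial.X + Polynomial.C (f w) * Polynomial.X ^ 2 with hP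
    have hP0 : P ≠ 0 := by
      intro h0
      have c0 : f u = 0 := by have := congrArg (fun R => Polynomial.coeff R 0) h0; simpa [hP, Polynomial.coeff_X, Polynomial.coeff_C, Polynomial.coeff_X_pow] using this
      have c1 : f v = 0 := by have := congrArg (fun R => Polynomial.coeff R 1) h0; simpa [hP, Polynomial.coeff_X, Polynomial.coeff_C, Polynomial.coeff_X_pow] using this
      have c2 : f w = 0 := by have := congrArg (fun R => Polynomial.coeff R 2) h0; simpa [hP, Polynomial.coeff_X, Polynomial.coeff_C, Polynomial.coeff_X_pow] using this
      apply hf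
      have hsp : Submodule.span ℝ (Set.range ![u, v, w]) = ⊤ :=
        hli.span_eq_top_of_card_eq_finrank' (by rw [hdim]; rfl)
      apply LinearMap.ext_on_range hsp
      intro i
      fin_cases i <;> simp [c0, c1, c2]
    refine (P.roots.toFinset.finite_toSet).subset ?_
    intro t ht
    have := hle ht
    rw [LinearMap.mem_ker, map_add, map_add, map_smul, map_smul] at this
    rw [Finset.mem_coe, Multiset.mem_toFinset, Polynomial.mem_roots hP0, Polynomial.IsRoot.def]
    simp only [hP, Polynomial.eval_add, Polynomial.eval_mul, Polynomial.eval_C, Polynomial.eval_X, Polynomial.eval_pow]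
    simp only [smul_eq_mul] at this
    linarith
  have hfin : (⋃ p ∈ Q, ⋃ q ∈ Q, {t : ℝ | u + t • v + t ^ 2 • w ∈ Submodule.span ℝ {p, q}}).Finite :=
    Set.Finite.biUnion Q.finite_toSet fun p _ => Set.Finite.biUnion Q.finite_toSet fun q _ => key p q
  obtain ⟨t, ht, hn⟩ := (Set.Ioi_infinite (0:ℝ)).exists_notMem_finite hfin
  refine ⟨t, ht, fun p hp q hq h => hn ?_⟩
  simp only [Set.mem_iUnion]
  exact ⟨p, hp, q, hq, h⟩

theorem vz_proj {V : Type*} [AddCommGroup V] [Module ℝ V] (hdim : Module.finrank ℝ V = 3)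
    (N : V) (hN : N ≠ 0) : ∃ pi : V →ₗ[ℝ] ℂ, pi N = 0 ∧ ∀ v, pi v = 0 → ∃ k : ℝ, v = k • N := by
  haveI : FiniteDimensional ℝ V := Module.finite_of_finrank_pos (by rw [hdim]; norm_num)
  have h1 : Module.finrank ℝ (V ⧸ (Submodule.span ℝ {N})) = Module.finrank ℝ ℂ := by
    have := Submodule.finrank_quotient_add_finrank (Submodule.span ℝ {N})
    rw [finrank_span_singleton hN, hdim] at this
    rw [Complex.finrank_real_complex]
    omega
  let e := LinearEquiv.ofFinrankEq (R := ℝ) _ _ h1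
  refine ⟨e.toLinearMap ∘ₗ (Submodule.span ℝ {N}).mkQ, ?_, ?_⟩
  · simp [(Submodule.Quotient.mk_eq_zero _).2 (Submodule.mem_span_singleton_self N)]
  · intro v hv
    have h2 : (Submodule.span ℝ {N}).mkQ v = 0 := by
      simpa using hv
    rw [Submodule.mkQ_apply, Submodule.Quotient.mk_eq_zero, Submodule.mem_span_singleton] at h2
    obtain ⟨k, hk⟩ := h2
    exact ⟨k, hk.symm⟩

theorem vz_main2 {V Reg : Type*} [AddCommGroup V] [Module ℝ V] [Fintype Reg]
    (hdim : Module.finrank ℝ V = 3) {K : Reg → Finset V} {Q : Finset V}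
    {Zf Wf : V → Reg} {col : Reg → Bool} {r0 r1 : Reg}
    (H : VzCfg K Q Zf Wf col r0 r1) (hq0 : ∀ q ∈ Q, q ≠ 0)
    (hdep : ∀ p ∈ Q, ∀ q ∈ Q, ∀ a b : ℝ, (a ≠ 0 ∨ b ≠ 0) → a • p + b • q = 0 → q = p ∨ q = -p)
    (u v w : V) (hu : u ∈ K r0) (hv : v ∈ K r0) (hw : w ∈ K r0)
    (hu' : -u ∈ K r1) (hv' : -v ∈ K r1) (hw' : -w ∈ K r1)
    (hli : LinearIndependent ℝ ![u, v, w]) :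
    Q.card + 4 ≤ 2 * Fintype.card Reg := by
  obtain ⟨t, ht, hspan⟩ := vz_pole hdim Q u v w hli
  have ht2 : 0 < t ^ 2 := by positivity
  set N := u + t • v + t ^ 2 • w with hNdef
  have huQ := (H.corner r0 u hu).1
  have hvQ := (H.corner r0 v hv).1
  have hN0 : N ≠ 0 := by
    intro h
    apply hspan u huQ u huQ
    rw [h]; exact Submodule.zero_mem _
  obtain ⟨pi, piN, hker⟩ := vz_proj hdim N hN0
  have qne : ∀ q ∈ Q, pi q ≠ 0 := by
    intro q hq h
    obtain ⟨k, hk⟩ := hker q h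
    have hk0 : k ≠ 0 := by rintro rfl; rw [zero_smul] at hk; exact hq0 q hq hk
    apply hspan q hq q hq
    have : N = k⁻¹ • q := by rw [hk, smul_smul, inv_mul_cancel₀ hk0, one_smul]
    rw [this]
    exact Submodule.smul_mem _ _ (Submodule.subset_span (Set.mem_insert _ _))
  have gen : ∀ p ∈ Q, ∀ q ∈ Q, vzcr (pi p) (pi q) = 0 → q = p ∨ q = -p := by
    intro p hp q hq h
    have aux : ∀ a b : ℝ, (a ≠ 0 ∨ b ≠ 0) → a • pi p + b • pi q = 0 → q = p ∨ q = -p := by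
      intro a b hab e
      rw [← map_smul, ← map_smul, ← map_add] at e
      obtain ⟨k, hk⟩ := hker _ e
      refine hdep p hp q hq a b hab ?_
      by_contra hne
      have hk0 : k ≠ 0 := by rintro rfl; rw [zero_smul] at hk; exact hne hk
      apply hspan p hp q hq
      have : N = k⁻¹ • (a • p + b • q) := by rw [hk, smul_smul, inv_mul_cancel₀ hk0, one_smul]
      rw [this]
      exact Submodule.smul_mem _ _ (Submodule.add_mem _
        (Submodule.smul_mem _ _ (Submodule.subset_span (Set.mem_insert _ _)))
        (Submodule.smul_mem _ _ (Submodule.subset_span (Set.mem_insert_of_mem _ rfl))))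
    by_cases h1 : (pi q).re = 0 ∧ (pi p).re = 0
    · refine aux (pi q).im (-(pi p).im) (Or.inl ?_) ?_
      · intro h2; exact qne q hq (Complex.ext h1.1 h2)
      · apply Complex.ext
        · simp [h1.1, h1.2]
        · simp; ring
    · refine aux (pi q).re (-(pi p).re) ?_ ?_
      · rw [neg_ne_zero]; tauto
      · apply Complex.ext
        · simp; ring
        · simp only [vzcr] at h
          simp; linarith
  have sgn : ∀ q ∈ Q, (∃ c ∈ K r0, 0 < vzcr (pi q) (pi c) ∧ -c ∈ K r1) ∧ (∃ c ∈ K r0, vzcr (pi q) (pi c) < 0 ∧ -c ∈ K r1) := by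
    intro q hq
    have e : vzcr (pi q) (pi u) + t * vzcr (pi q) (pi v) + t ^ 2 * vzcr (pi q) (pi w) = 0 := by
      rw [← vzcr_smul_right, ← vzcr_smul_right, ← vzcr_add_right, ← vzcr_add_right, ← map_smul, ← map_smul, ← map_add, ← map_add]
      rw [hNdef] at piN
      rw [piN]; simp [vzcr]
    have hn : vzcr (pi q) (pi u) ≠ 0 ∨ vzcr (pi q) (pi v) ≠ 0 ∨ vzcr (pi q) (pi w) ≠ 0 := by
      by_contra hcon
      push Not at hcon
      have h1 := gen q hq u huQ hcon.1
      have h2 := gen q hq v hvQ hcon.2.1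
      have li := LinearIndependent.pair_iff.1 (show LinearIndependent ℝ ![u, v] from by
        have := hli.comp ![0, 1] (by decide)
        convert this using 1
        ext i; fin_cases i <;> rfl)
      rcases h1 with h1 | h1 <;> rcases h2 with h2 | h2
      · have := (li 1 (-1) (by rw [h1, h2]; module)).1; norm_num at this
      · have := (li 1 1 (by rw [h1, h2]; module)).1; norm_num at this
      · have := (li 1 1 (by rw [h1, h2]; module)).1; norm_num at this
      · have := (li 1 (-1) (by rw [h1, h2]; module)).1; norm_num at this
    obtain ⟨s1, s2⟩ := vz_signs t _ _ _ ht e hn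
    constructor
    · rcases s1 with h | h | h
      exacts [⟨u, hu, h, hu'⟩, ⟨v, hv, h, hv'⟩, ⟨w, hw, h, hw'⟩]
    · rcases s2 with h | h | h
      exacts [⟨u, hu, h, hu'⟩, ⟨v, hv, h, hv'⟩, ⟨w, hw, h, hw'⟩]
  have neg_r : ∀ a b : ℂ, vzcr a (-b) = - vzcr a b := fun a b => by simp [vzcr]; ring
  refine vz_main H (N := N) (pi := pi) ⟨hker, piN, hN0, gen, qne, ?_, ?_, ?_, ?_⟩
  · exact ((VzC.of_mem hu).add ((VzC.of_mem hv).smul ht.le)).add ((VzC.of_mem hw).smul ht2.le)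
  · have : -N = -u + t • (-v) + t ^ 2 • (-w) := by rw [hNdef]; module
    rw [this]
    exact ((VzC.of_mem hu').add ((VzC.of_mem hv').smul ht.le)).add ((VzC.of_mem hw').smul ht2.le)
  · rintro r (rfl | rfl) q hq
    · obtain ⟨⟨c, hc, h, -⟩, -⟩ := sgn q (H.corner _ q hq).1
      exact ⟨c, hc, h⟩
    · obtain ⟨-, ⟨c, -, h, hc⟩⟩ := sgn q (H.corner _ q hq).1
      exact ⟨-c, hc, by rw [map_neg, neg_r]; linarith⟩
  · rintro r (rfl | rfl) q hq
    · obtain ⟨-, ⟨c, hc, h, -⟩⟩ := sgn q (H.corner _ q hq).1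
      exact ⟨c, hc, by rw [vzcr_swap]; linarith⟩
    · obtain ⟨⟨c, -, h, hc⟩, -⟩ := sgn q (H.corner _ q hq).1
      exact ⟨-c, hc, by rw [vzcr_swap, map_neg, neg_r]; linarith⟩

end Cfg


section Inst
open Classical

variable {E : Type*} [NormedAddCommGroup E] [InnerProductSpace ℝ E]

theorem vz_inner_sum (S : Finset E) (f : E → ℝ) (d : E) :
    inner ℝ (∑ v ∈ S, f v • v) d = ∑ v ∈ S, f v * inner ℝ v d := by
  rw [sum_inner]
  exact Finset.sum_congr rfl fun v _ => by rw [real_inner_smul_left]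

theorem vz_cone_inner {S : Finset E} {w d : E} (h : VzC S w) (hd : ∀ u ∈ S, 0 ≤ inner ℝ u d) :
    0 ≤ inner ℝ w d := by
  obtain ⟨f, hf, rfl⟩ := h
  rw [vz_inner_sum]
  exact Finset.sum_nonneg fun v hv => mul_nonneg (hf v) (hd v hv)

theorem vz_cone_h0 {S : Finset E} {w1 w2 : E} (hS : ∀ u ∈ S, ∀ v ∈ S, 0 ≤ inner ℝ u v)
    (h1 : VzC S w1) (h2 : VzC S w2) (h : w1 + w2 = 0) : w1 = 0 := by
  have h3 : 0 ≤ inner ℝ w1 w2 := by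
    apply vz_cone_inner h1
    intro u hu
    rw [real_inner_comm]
    exact vz_cone_inner h2 fun v hv => hS v hv u hu
  have : w2 = -w1 := (neg_eq_of_add_eq_zero_right h).symm
  rw [this, inner_neg_right, real_inner_self_eq_norm_sq] at h3
  have : ‖w1‖ ^ 2 = 0 := le_antisymm (by linarith) (by positivity)
  simpa using this

theorem vz_cone_sep {S T : Finset E} {w d : E} (hS : ∀ u ∈ S, 0 < inner ℝ u d)
    (hT : ∀ u ∈ T, inner ℝ u d < 0) (h1 : VzC S w) (h2 : VzC T w) : w = 0 := by
  have a2 : 0 ≤ inner ℝ w (-d) := vz_cone_inner h2 fun v hv => by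
    rw [inner_neg_right]; linarith [hT v hv]
  rw [inner_neg_right] at a2
  obtain ⟨f, hf, rfl⟩ := h1
  rw [vz_inner_sum] at a2
  have h0 : ∑ v ∈ S, f v * inner ℝ v d = 0 :=
    le_antisymm (by linarith) (Finset.sum_nonneg fun v hv => mul_nonneg (hf v) (hS v hv).le)
  rw [Finset.sum_eq_zero_iff_of_nonneg fun v hv => mul_nonneg (hf v) (hS v hv).le] at h0
  apply Finset.sum_eq_zero
  intro v hv
  rcases mul_eq_zero.1 (h0 v hv) with h | h
  · rw [h, zero_smul]
  · exact absurd h (hS v hv).ne'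

theorem vz_num (r a b s D : ℝ) (hr : 0 < r) (ha : r ≤ a) (hb : r ≤ b) (hD : 0 ≤ D) (hD1 : D ≤ 1)
    (hs : s ≤ r * D) (h : r ^ 2 - (a + b) * s + a * b * (1 + D ^ 2) / 2 ≤ 0) : D = 1 ∧ s = r := by
  have h1 : 0 ≤ a * b * (1 - D) ^ 2 := by
    have : 0 ≤ a * b := mul_nonneg (by linarith) (by linarith)
    positivity
  have h2 : 0 ≤ D * ((a - r) * (b - r)) :=
    mul_nonneg hD (mul_nonneg (by linarith) (by linarith))
  have h3 : 0 ≤ r ^ 2 * (1 - D) := mul_nonneg (by positivity) (by linarith)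
  have h4 : 0 ≤ (a + b) * (r * D - s) := mul_nonneg (by linarith) (by linarith)
  have e3 : r ^ 2 * (1 - D) = 0 := by nlinarith
  have e4 : (a + b) * (r * D - s) = 0 := by nlinarith
  have f3 : D = 1 := by
    rcases mul_eq_zero.1 e3 with h | h
    · exact absurd h (by positivity)
    · linarith
  refine ⟨f3, ?_⟩
  rcases mul_eq_zero.1 e4 with h | h
  · linarith
  · rw [f3] at h; linarith

theorem vz_cone_RB {S T : Finset E} {w d : E} (hS : ∀ u ∈ S, ‖u‖ = 1) (hT : ∀ u ∈ T, ‖u‖ = 1)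
    (hd : ‖d‖ ≤ 1) (hST : ∀ u ∈ S, ∀ v ∈ T, ‖u + v - d‖ ≤ 1) (h1 : VzC S w) (h2 : VzC T w)
    (hw : w ≠ 0) : ‖d‖ = 1 ∧ w = ‖w‖ • d := by
  have key : ∀ u ∈ S, ∀ v ∈ T, inner ℝ (u - d) (v - d) ≤ (‖d‖ ^ 2 - 1) / 2 := by
    intro u hu v hv
    have e := hST u hu v hv
    have e1 : ‖u + v - d‖ ^ 2 ≤ 1 := by nlinarith [norm_nonneg (u + v - d)]
    rw [← real_inner_self_eq_norm_sq] at e1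
    have e2 : inner ℝ u u = (1 : ℝ) := by rw [real_inner_self_eq_norm_sq, hS u hu]; norm_num
    have e3 : inner ℝ v v = (1 : ℝ) := by rw [real_inner_self_eq_norm_sq, hT v hv]; norm_num
    rw [← real_inner_self_eq_norm_sq]
    simp only [inner_sub_left, inner_sub_right, inner_add_left, inner_add_right] at e1 ⊢
    rw [e2, e3, real_inner_comm u v, real_inner_comm u d, real_inner_comm v d] at e1
    rw [real_inner_comm v d]
    linarith
  have nb : ∀ (R : Finset E) (f : E → ℝ), (∀ u ∈ R, ‖u‖ = 1) → (∀ v, 0 ≤ f v) →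
      ‖∑ v ∈ R, f v • v‖ ≤ ∑ v ∈ R, f v := by
    intro R f hR hf
    refine (norm_sum_le _ _).trans (Finset.sum_le_sum fun v hv => ?_)
    rw [norm_smul, hR v hv, Real.norm_of_nonneg (hf v), mul_one]
  obtain ⟨f, hf, hfw⟩ := h1
  obtain ⟨g, hg, hgw⟩ := h2
  have ha : ‖w‖ ≤ ∑ v ∈ S, f v := by rw [hfw]; exact nb S f hS hf
  have hb : ‖w‖ ≤ ∑ v ∈ T, g v := by rw [hgw]; exact nb T g hT hg
  set a := ∑ v ∈ S, f v with ha'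
  set b := ∑ v ∈ T, g v with hb'
  have main : inner ℝ (w - a • d) (w - b • d) ≤ a * b * ((‖d‖ ^ 2 - 1) / 2) := by
    have e1 : w - a • d = ∑ u ∈ S, f u • (u - d) := by
      simp only [smul_sub, Finset.sum_sub_distrib, ← Finset.sum_smul]; rw [← hfw]
    have e2 : w - b • d = ∑ u ∈ T, g u • (u - d) := by
      simp only [smul_sub, Finset.sum_sub_distrib, ← Finset.sum_smul]; rw [← hgw]
    rw [e1, e2, sum_inner, ha', hb', Finset.sum_mul, Finset.sum_mul]
    refine Finset.sum_le_sum fun u hu => ?_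
    rw [inner_sum, Finset.mul_sum, Finset.sum_mul]
    refine Finset.sum_le_sum fun v hv => ?_
    rw [real_inner_smul_left, real_inner_smul_right, ← mul_assoc]
    exact mul_le_mul_of_nonneg_left (key u hu v hv) (mul_nonneg (hf u) (hg v))
  have hwp : 0 < ‖w‖ := norm_pos_iff.2 hw
  have hs : inner ℝ w d ≤ ‖w‖ * ‖d‖ := real_inner_le_norm w d
  simp only [inner_sub_left, inner_sub_right, real_inner_smul_left, real_inner_smul_right] at main
  rw [real_inner_self_eq_norm_sq, real_inner_self_eq_norm_sq, real_inner_comm w d] at main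
  obtain ⟨hD, hs'⟩ := vz_num ‖w‖ a b (inner ℝ w d) ‖d‖ hwp ha hb (norm_nonneg _) hd hs (by linarith)
  refine ⟨hD, ?_⟩
  have : ‖w - ‖w‖ • d‖ ^ 2 = 0 := by
    rw [← real_inner_self_eq_norm_sq]
    simp only [inner_sub_left, inner_sub_right, real_inner_smul_left, real_inner_smul_right]
    rw [real_inner_self_eq_norm_sq, real_inner_self_eq_norm_sq, real_inner_comm w d, hs', hD]
    ring
  have h0 : w - ‖w‖ • d = 0 := by simpa using this
  exact sub_eq_zero.1 h0

theorem vz_unit_eq {p q : E} (hp : ‖p‖ = 1) (hq : ‖q‖ = 1) (h : inner ℝ p q = (1 : ℝ)) : p = q :=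
  (inner_eq_one_iff_of_norm_eq_one hp hq).1 h

theorem vz_half {q v : E} (hq : ‖q‖ = 1) (h : ‖q - v‖ ≤ 1) : ‖v‖ ^ 2 ≤ 2 * inner ℝ v q := by
  have e1 : ‖q - v‖ ^ 2 ≤ 1 := by nlinarith [norm_nonneg (q - v)]
  rw [norm_sub_sq_real, hq, real_inner_comm] at e1
  linarith

theorem vz_half_eq {q v : E} (hq : ‖q‖ = 1) (h : ‖q - v‖ = 1) : ‖v‖ ^ 2 = 2 * inner ℝ v q := by
  have e1 : ‖q - v‖ ^ 2 = 1 := by rw [h]; norm_num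
  rw [norm_sub_sq_real, hq, real_inner_comm] at e1
  linarith

theorem vz_cone_X {S : Finset E} {w1 w2 q v : E} {l : ℝ} (hS : ∀ u ∈ S, ‖u‖ = 1) (hq : ‖q‖ = 1)
    (hv : v ≠ 0) (hvq : ‖q - v‖ = 1) (hvS : ∀ u ∈ S, ‖u - v‖ ≤ 1)
    (h1 : VzC S w1) (h2 : VzC S w2) (h : w1 + w2 = l • q) : ∃ m : ℝ, w1 = m • q := by
  obtain ⟨f, hf, rfl⟩ := h1
  obtain ⟨g, hg, rfl⟩ := h2
  have hsum : ∑ u ∈ S, (f u + g u) • u = l • q := by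
    rw [← h, ← Finset.sum_add_distrib]; simp only [add_smul]
  have hvp : 0 < ‖v‖ ^ 2 := by have := norm_pos_iff.2 hv; positivity
  have e1 : ∑ u ∈ S, (f u + g u) ≤ l := by
    have e2 : inner ℝ (∑ u ∈ S, (f u + g u) • u) v = inner ℝ (l • q) v := by rw [hsum]
    rw [vz_inner_sum S (fun u => f u + g u), real_inner_smul_left, real_inner_comm] at e2
    have e3 : (∑ u ∈ S, (f u + g u)) * (‖v‖ ^ 2 / 2) ≤ ∑ u ∈ S, (f u + g u) * inner ℝ u v := by
      rw [Finset.sum_mul]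
      refine Finset.sum_le_sum fun u hu => mul_le_mul_of_nonneg_left ?_ (add_nonneg (hf u) (hg u))
      have := vz_half (hS u hu) (hvS u hu)
      rw [real_inner_comm] at this
      linarith
    have e4 := vz_half_eq hq hvq
    rw [e2] at e3
    have : inner ℝ v q = ‖v‖ ^ 2 / 2 := by linarith
    rw [this] at e3
    exact le_of_mul_le_mul_right e3 (by linarith)
  have e2 : ∑ u ∈ S, (f u + g u) * inner ℝ u q = l := by
    rw [← vz_inner_sum S (fun u => f u + g u), hsum, real_inner_smul_left, real_inner_self_eq_norm_sq, hq]
    norm_num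
  have hle : ∀ u ∈ S, inner ℝ u q ≤ (1 : ℝ) := fun u hu => by
    have := real_inner_le_norm u q
    rwa [hS u hu, hq, one_mul] at this
  have hnn : ∀ u ∈ S, 0 ≤ (f u + g u) * (1 - inner ℝ u q) := fun u hu =>
    mul_nonneg (add_nonneg (hf u) (hg u)) (by linarith [hle u hu])
  have e3 : ∑ u ∈ S, (f u + g u) * (1 - inner ℝ u q) = 0 := by
    refine le_antisymm ?_ (Finset.sum_nonneg hnn)
    simp only [mul_sub, mul_one, Finset.sum_sub_distrib]
    linarith
  rw [Finset.sum_eq_zero_iff_of_nonneg hnn] at e3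
  refine ⟨∑ u ∈ S, f u, ?_⟩
  rw [Finset.sum_smul]
  refine Finset.sum_congr rfl fun u hu => ?_
  rcases mul_eq_zero.1 (e3 u hu) with h | h
  · have : f u = 0 := by linarith [hf u, hg u]
    rw [this, zero_smul, zero_smul]
  · rw [vz_unit_eq (hS u hu) hq (by linarith)]

/-- the cone generators of a region -/
noncomputable def vzK (X : Finset E) (r : X × Bool) : Finset E :=
  (X.filter fun z => dist r.1.1 z = 1).image fun z => if r.2 then z - r.1.1 else r.1.1 - z

theorem vzK_t {X : Finset E} {x : X} {u : E} : u ∈ vzK X (x, true) ↔ ∃ z ∈ X, ‖u‖ = 1 ∧ u = z - x.1 := by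
  simp only [vzK, Finset.mem_image, Finset.mem_filter, if_true]
  constructor
  · rintro ⟨z, ⟨h1, h2⟩, rfl⟩
    exact ⟨z, h1, by rw [← dist_eq_norm, dist_comm]; exact h2, rfl⟩
  · rintro ⟨z, h1, h2, rfl⟩
    exact ⟨z, ⟨h1, by rw [dist_comm, dist_eq_norm]; exact h2⟩, rfl⟩

theorem vzK_f {X : Finset E} {x : X} {u : E} : u ∈ vzK X (x, false) ↔ ∃ z ∈ X, ‖u‖ = 1 ∧ u = x.1 - z := by
  simp only [vzK, Finset.mem_image, Finset.mem_filter, Bool.false_eq_true, if_false]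
  constructor
  · rintro ⟨z, ⟨h1, h2⟩, rfl⟩
    exact ⟨z, h1, by rw [← dist_eq_norm]; exact h2, rfl⟩
  · rintro ⟨z, h1, h2, rfl⟩
    exact ⟨z, ⟨h1, by rw [dist_eq_norm]; exact h2⟩, rfl⟩

theorem vz_pair_inj {x y x' y' : E} (h : ‖y - x‖ = 1) (h1 : ‖y' - x‖ ≤ 1) (h2 : ‖y - x'‖ ≤ 1)
    (e : y - x = y' - x') : x = x' ∧ y = y' := by
  have hp := parallelogram_law_with_norm ℝ (y - x) (x' - x)
  have e1 : y - x + (x' - x) = y' - x := by rw [e]; abel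
  have e2 : y - x - (x' - x) = y - x' := by abel
  rw [e1, e2, h] at hp
  have : ‖x' - x‖ * ‖x' - x‖ = 0 := by
    nlinarith [norm_nonneg (y' - x), norm_nonneg (y - x'), norm_nonneg (x' - x)]
  have h0 : x' - x = 0 := by simpa using this
  have h3 : x' = x := sub_eq_zero.1 h0
  subst h3
  exact ⟨rfl, by simpa using e⟩

end Inst


section Inst2
open Classical

variable {E : Type*} [NormedAddCommGroup E] [InnerProductSpace ℝ E]

theorem vz_dep {p q : E} (hp : ‖p‖ = 1) (hq : ‖q‖ = 1) {a b : ℝ} (hab : a ≠ 0 ∨ b ≠ 0)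
    (h : a • p + b • q = 0) : q = p ∨ q = -p := by
  have h1 : a • p = -(b • q) := eq_neg_of_add_eq_zero_left h
  have h2 : |a| = |b| := by
    have := congrArg norm h1
    rwa [norm_neg, norm_smul, norm_smul, hp, hq, mul_one, mul_one] at this
  have hb : b ≠ 0 := by
    rintro rfl
    rcases hab with h | h
    · rw [abs_zero, abs_eq_zero] at h2; exact h h2
    · exact h rfl
  rcases abs_eq_abs.1 h2 with h3 | h3
  · right
    rw [h3, ← smul_add] at h
    rcases smul_eq_zero.1 h with h | h
    · exact absurd h hb
    · exact eq_neg_of_add_eq_zero_right h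
  · left
    rw [h3, neg_smul, neg_add_eq_zero] at h
    exact (smul_right_injective E hb h).symm

theorem vz_count (hdim : Module.finrank ℝ E = 3) (X : Finset E)
    (hX : ∀ x ∈ X, ∀ y ∈ X, ‖y - x‖ ≤ 1)
    (hdeg : ∀ y ∈ X, ∀ x : E, ∃ z ∈ X, z ≠ x ∧ ‖z - y‖ = 1)
    (x0 : E) (hx0 : x0 ∈ X) (u v w : E) (hu : u ∈ X) (hv : v ∈ X) (hw : w ∈ X)
    (hu1 : ‖u - x0‖ = 1) (hv1 : ‖v - x0‖ = 1) (hw1 : ‖w - x0‖ = 1)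
    (hli : LinearIndependent ℝ ![u - x0, v - x0, w - x0]) :
    (X.offDiag.filter fun p => dist p.1 p.2 = 1).card + 4 ≤ 4 * X.card := by
  let P : Finset (E × E) := X.offDiag.filter fun p => dist p.1 p.2 = 1
  let Q : Finset E := P.image fun p => p.2 - p.1
  have hP : ∀ p : E × E, p ∈ P ↔ p.1 ∈ X ∧ p.2 ∈ X ∧ ‖p.2 - p.1‖ = 1 := by
    intro p
    simp only [P, Finset.mem_filter, Finset.mem_offDiag]
    rw [dist_comm, dist_eq_norm]
    constructor
    · rintro ⟨⟨a, b, c⟩, d⟩; exact ⟨a, b, d⟩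
    · rintro ⟨a, b, d⟩
      refine ⟨⟨a, b, ?_⟩, d⟩
      intro h
      rw [h, sub_self, norm_zero] at d
      exact zero_ne_one d
  have hQ : ∀ q, q ∈ Q ↔ ∃ p : X × X, q = p.2.1 - p.1.1 ∧ ‖q‖ = 1 := by
    intro q
    simp only [Q, Finset.mem_image]
    constructor
    · rintro ⟨p, hp, rfl⟩
      obtain ⟨a, b, c⟩ := (hP p).1 hp
      exact ⟨(⟨p.1, a⟩, ⟨p.2, b⟩), rfl, c⟩
    · rintro ⟨⟨⟨a, ha⟩, ⟨b, hb⟩⟩, rfl, c⟩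
      exact ⟨(a, b), (hP _).2 ⟨ha, hb, c⟩, rfl⟩
  have hcard : Q.card = P.card := by
    apply Finset.card_image_of_injOn
    rintro ⟨a, b⟩ hp ⟨a', b'⟩ hp' e
    obtain ⟨h1, h2, h3⟩ := (hP _).1 hp
    obtain ⟨h1', h2', h3'⟩ := (hP _).1 hp'
    obtain ⟨e1, e2⟩ := vz_pair_inj h3 (hX _ h1 _ h2') (hX _ h1' _ h2) e
    exact Prod.ext e1 e2
  let Zf : E → X × Bool := fun q =>
    if h : ∃ p : X × X, q = p.2.1 - p.1.1 ∧ ‖q‖ = 1 then (h.choose.1, true) else (⟨x0, hx0⟩, true)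
  let Wf : E → X × Bool := fun q =>
    if h : ∃ p : X × X, q = p.2.1 - p.1.1 ∧ ‖q‖ = 1 then (h.choose.2, false) else (⟨x0, hx0⟩, false)
  have hZW : ∀ x y : X, ‖y.1 - x.1‖ = 1 → Zf (y.1 - x.1) = (x, true) ∧ Wf (y.1 - x.1) = (y, false) := by
    intro x y h
    have hex : ∃ p : X × X, y.1 - x.1 = p.2.1 - p.1.1 ∧ ‖y.1 - x.1‖ = 1 := ⟨(x, y), rfl, h⟩
    have hs := hex.choose_spec
    obtain ⟨e1, e2⟩ := vz_pair_inj h (hX _ x.2 _ hex.choose.2.2) (hX _ hex.choose.1.2 _ y.2) hs.1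
    have e1' : hex.choose.1 = x := (Subtype.ext e1).symm
    have e2' : hex.choose.2 = y := (Subtype.ext e2).symm
    simp only [Zf, Wf]
    rw [dif_pos hex, dif_pos hex, e1', e2']
    exact ⟨rfl, rfl⟩
  have hQ' : ∀ q ∈ Q, ∃ x y : X, q = y.1 - x.1 ∧ ‖q‖ = 1 ∧ Zf q = (x, true) ∧ Wf q = (y, false) := by
    intro q hq
    obtain ⟨⟨x, y⟩, rfl, h⟩ := (hQ q).1 hq
    exact ⟨x, y, rfl, h, hZW x y h⟩
  have hK1 : ∀ r, ∀ u ∈ vzK X r, ‖u‖ = 1 := by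
    rintro ⟨x, _ | _⟩ u hu
    · obtain ⟨z, _, h, _⟩ := vzK_f.1 hu; exact h
    · obtain ⟨z, _, h, _⟩ := vzK_t.1 hu; exact h
  have hK2 : ∀ r, ∀ u ∈ vzK X r, ∀ v ∈ vzK X r, ‖u - v‖ ≤ 1 := by
    rintro ⟨x, _ | _⟩ u hu v hv
    · obtain ⟨z, hz, h, rfl⟩ := vzK_f.1 hu
      obtain ⟨z', hz', h', rfl⟩ := vzK_f.1 hv
      rw [sub_sub_sub_cancel_left]; exact hX _ hz _ hz'
    · obtain ⟨z, hz, h, rfl⟩ := vzK_t.1 hu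
      obtain ⟨z', hz', h', rfl⟩ := vzK_t.1 hv
      rw [sub_sub_sub_cancel_right]; exact hX _ hz' _ hz
  have hRB : ∀ (x y : X) (w : E), VzC (vzK X (x, true)) w → VzC (vzK X (y, false)) w → w ≠ 0 →
      ∃ q ∈ Q, ∃ l > 0, w = (l : ℝ) • q ∧ (x, true) = Zf q ∧ (y, false) = Wf q := by
    intro x y w h1 h2 hw
    obtain ⟨a, b⟩ := vz_cone_RB (d := y.1 - x.1) (hK1 _) (hK1 _) (hX _ x.2 _ y.2) (by
      intro u hu v hv
      obtain ⟨z, hz, h, rfl⟩ := vzK_t.1 hu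
      obtain ⟨z', hz', h', rfl⟩ := vzK_f.1 hv
      have : z - x.1 + (y.1 - z') - (y.1 - x.1) = z - z' := by abel
      rw [this]; exact hX _ hz' _ hz) h1 h2 hw
    exact ⟨y.1 - x.1, (hQ _).2 ⟨(x, y), rfl, a⟩, ‖w‖, norm_pos_iff.2 hw, b, (hZW x y a).1.symm, (hZW x y a).2.symm⟩
  have hsame : ∀ (c : Bool) (x y : X) (w : E), x ≠ y → VzC (vzK X (x, c)) w → VzC (vzK X (y, c)) w → w = 0 := by
    intro c x y w hxy h1 h2
    have hne : y.1 - x.1 ≠ 0 := fun h => hxy (Subtype.ext (sub_eq_zero.1 h).symm)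
    have hne' : x.1 - y.1 ≠ 0 := fun h => hxy (Subtype.ext (sub_eq_zero.1 h))
    have p1 : 0 < ‖y.1 - x.1‖ ^ 2 := by have := norm_pos_iff.2 hne; positivity
    have p2 : 0 < ‖x.1 - y.1‖ ^ 2 := by have := norm_pos_iff.2 hne'; positivity
    cases c
    · apply vz_cone_sep (d := x.1 - y.1) _ _ h1 h2
      · intro u hu
        obtain ⟨z, hz, h, rfl⟩ := vzK_f.1 hu
        have := vz_half (v := x.1 - y.1) h (by rw [sub_sub_sub_cancel_left]; exact hX _ hz _ y.2)
        rw [real_inner_comm] at this; linarith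
      · intro u hu
        obtain ⟨z, hz, h, rfl⟩ := vzK_f.1 hu
        have := vz_half (v := y.1 - x.1) h (by rw [sub_sub_sub_cancel_left]; exact hX _ hz _ x.2)
        rw [real_inner_comm] at this
        have e : x.1 - y.1 = -(y.1 - x.1) := by abel
        rw [e, inner_neg_right]; linarith
    · apply vz_cone_sep (d := y.1 - x.1) _ _ h1 h2
      · intro u hu
        obtain ⟨z, hz, h, rfl⟩ := vzK_t.1 hu
        have := vz_half (v := y.1 - x.1) h (by rw [sub_sub_sub_cancel_right]; exact hX _ y.2 _ hz)
        rw [real_inner_comm] at this; linarith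
      · intro u hu
        obtain ⟨z, hz, h, rfl⟩ := vzK_t.1 hu
        have := vz_half (v := x.1 - y.1) h (by rw [sub_sub_sub_cancel_right]; exact hX _ x.2 _ hz)
        rw [real_inner_comm] at this
        have e : y.1 - x.1 = -(x.1 - y.1) := by abel
        rw [e, inner_neg_right]; linarith
  have H : VzCfg (vzK X) Q Zf Wf (fun r => r.2) (⟨x0, hx0⟩, true) (⟨x0, hx0⟩, false) := by
    refine ⟨?_, ?_, ?_, ?_, ?_, ?_, ?_, ?_, ?_, ?_, rfl, rfl, ?_⟩
    · intro q hq
      obtain ⟨x, y, rfl, h, e1, e2⟩ := hQ' q hq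
      rw [e1]; exact vzK_t.2 ⟨y, y.2, h, rfl⟩
    · intro q hq
      obtain ⟨x, y, rfl, h, e1, e2⟩ := hQ' q hq
      rw [e2]; exact vzK_f.2 ⟨x, x.2, h, rfl⟩
    · intro q hq
      obtain ⟨x, y, rfl, h, e1, e2⟩ := hQ' q hq
      rw [e1]
    · intro q hq
      obtain ⟨x, y, rfl, h, e1, e2⟩ := hQ' q hq
      rw [e2]
    · rintro ⟨x, _ | _⟩ c hc
      · obtain ⟨z, hz, h, rfl⟩ := vzK_f.1 hc
        exact ⟨(hQ _).2 ⟨(⟨z, hz⟩, x), rfl, h⟩, Or.inr (hZW ⟨z, hz⟩ x h).2.symm⟩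
      · obtain ⟨z, hz, h, rfl⟩ := vzK_t.1 hc
        exact ⟨(hQ _).2 ⟨(x, ⟨z, hz⟩), rfl, h⟩, Or.inl (hZW x ⟨z, hz⟩ h).1.symm⟩
    · intro q hq
      obtain ⟨x, y, rfl, h, e1, e2⟩ := hQ' q hq
      exact (hQ _).2 ⟨(y, x), by simp, by rwa [norm_neg]⟩
    · intro r w1 w2 h1 h2 h
      refine vz_cone_h0 ?_ h1 h2 h
      intro u hu v hv
      have := vz_half (hK1 r u hu) (hK2 r u hu v hv)
      rw [real_inner_comm] at this
      nlinarith [sq_nonneg ‖v‖]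
    · rintro ⟨x, c⟩ ⟨y, c'⟩ w hne h1 h2 hw
      cases c <;> cases c'
      · exact absurd (hsame _ x y w (fun h => hne (by rw [h])) h1 h2) hw
      · obtain ⟨q, a, l, b, c, d, e⟩ := hRB y x w h2 h1 hw
        exact ⟨q, a, l, b, c, Or.inr ⟨e, d⟩⟩
      · obtain ⟨q, a, l, b, c, d, e⟩ := hRB x y w h1 h2 hw
        exact ⟨q, a, l, b, c, Or.inl ⟨d, e⟩⟩
      · exact absurd (hsame _ x y w (fun h => hne (by rw [h])) h1 h2) hw
    · intro q hq r hr w1 w2 l h1 h2 h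
      obtain ⟨x, y, rfl, hn, e1, e2⟩ := hQ' q hq
      rw [e1, e2] at hr
      rcases hr with rfl | rfl
      · obtain ⟨z, hz, hzx, hzy⟩ := hdeg y y.2 x
        refine vz_cone_X (v := z - x.1) (hK1 _) hn (sub_ne_zero.2 hzx) ?_ ?_ h1 h2 h
        · rw [sub_sub_sub_cancel_right, norm_sub_rev]; exact hzy
        · intro u hu
          obtain ⟨z', hz', h', rfl⟩ := vzK_t.1 hu
          rw [sub_sub_sub_cancel_right]; exact hX _ hz _ hz'
      · obtain ⟨z, hz, hzx, hzy⟩ := hdeg x x.2 y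
        refine vz_cone_X (v := y.1 - z) (hK1 _) hn (sub_ne_zero.2 hzx.symm) ?_ ?_ h1 h2 h
        · rw [sub_sub_sub_cancel_left]; exact hzy
        · intro u hu
          obtain ⟨z', hz', h', rfl⟩ := vzK_f.1 hu
          rw [sub_sub_sub_cancel_left]; exact hX _ hz' _ hz
    · intro q hq q' hq' a b
      obtain ⟨x, y, rfl, h, e1, e2⟩ := hQ' q hq
      obtain ⟨x', y', rfl, h', e1', e2'⟩ := hQ' q' hq'
      rw [e1, e1'] at a
      rw [e2, e2'] at b
      rw [(Prod.mk.inj a).1, (Prod.mk.inj b).1]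
    · rintro q hq ⟨a, b⟩
      obtain ⟨x, y, rfl, h, e1, e2⟩ := hQ' q hq
      rw [e1] at a
      rw [e2] at b
      rw [(Prod.mk.inj a).1, (Prod.mk.inj b).1] at h
      simp at h
  have hQn : ∀ q ∈ Q, ‖q‖ = 1 := fun q hq => by
    obtain ⟨x, y, rfl, h, e1, e2⟩ := hQ' q hq; exact h
  have res := vz_main2 hdim H (fun q hq h0 => by have := hQn q hq; rw [h0, norm_zero] at this; exact zero_ne_one this)
    (fun p hp q hq a b hab h => vz_dep (hQn p hp) (hQn q hq) hab h)
    (u - x0) (v - x0) (w - x0) (vzK_t.2 ⟨u, hu, hu1, rfl⟩) (vzK_t.2 ⟨v, hv, hv1, rfl⟩)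
    (vzK_t.2 ⟨w, hw, hw1, rfl⟩)
    (vzK_f.2 ⟨u, hu, by rwa [norm_neg], neg_sub _ _⟩) (vzK_f.2 ⟨v, hv, by rwa [norm_neg], neg_sub _ _⟩)
    (vzK_f.2 ⟨w, hw, by rwa [norm_neg], neg_sub _ _⟩) hli
  rw [hcard] at res
  have hc : Fintype.card (X × Bool) = X.card * 2 := by simp
  rw [hc] at res
  show P.card + 4 ≤ _
  omega

end Inst2


section Fin3
open Classical

variable {E : Type*} [NormedAddCommGroup E] [InnerProductSpace ℝ E]

theorem vz_core {S : Finset E} (hS : ∀ u ∈ S, ‖u‖ = 1) (hSS : ∀ u ∈ S, ∀ v ∈ S, ‖u - v‖ ≤ 1)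
    (hex : ∀ q ∈ S, ∃ v, v ≠ 0 ∧ ‖q - v‖ = 1 ∧ ∀ u ∈ S, ‖u - v‖ ≤ 1)
    {u1 u2 u3 : E} (h1 : u1 ∈ S) (h2 : u2 ∈ S) (h3 : u3 ∈ S) (h13 : u1 ≠ u3) (h23 : u2 ≠ u3)
    {a b c : ℝ} (ha : 0 ≤ a) (hb : 0 ≤ b) (h0 : a ≠ 0 ∨ b ≠ 0 ∨ c ≠ 0)
    (h : a • u1 + b • u2 = c • u3) : False := by
  obtain ⟨v, hv, hvq, hvS⟩ := hex u3 h3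
  have aux : ∀ u ∈ S, u ≠ u3 → ∀ a m : ℝ, a • u = m • u3 → a = 0 := by
    intro u hu hne a m e
    by_contra ha
    rcases vz_dep (hS u hu) (hS u3 h3) (a := a) (b := -m) (Or.inl ha) (by rw [e, neg_smul, add_neg_cancel]) with h | h
    · exact hne h.symm
    · have := hSS u hu u3 h3
      rw [h, sub_neg_eq_add, ← two_smul ℝ, norm_smul, hS u hu] at this
      norm_num at this
  have c1 := (VzC.of_mem h1).smul ha
  have c2 := (VzC.of_mem h2).smul hb
  obtain ⟨m, hm⟩ := vz_cone_X hS (hS u3 h3) hv hvq hvS c1 c2 h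
  obtain ⟨m', hm'⟩ := vz_cone_X hS (hS u3 h3) hv hvq hvS c2 c1 (by rw [add_comm]; exact h)
  have a0 := aux u1 h1 h13 a m hm
  have b0 := aux u2 h2 h23 b m' hm'
  rw [a0, b0, zero_smul, zero_smul, add_zero] at h
  rcases h0 with h0 | h0 | h0
  · exact h0 a0
  · exact h0 b0
  · rcases smul_eq_zero.1 h.symm with h | h
    · exact h0 h
    · have := hS u3 h3
      rw [h, norm_zero] at this
      exact zero_ne_one this

theorem vz_core2 {S : Finset E} (hS : ∀ u ∈ S, ‖u‖ = 1) (hSS : ∀ u ∈ S, ∀ v ∈ S, ‖u - v‖ ≤ 1)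
    (hex : ∀ q ∈ S, ∃ v, v ≠ 0 ∧ ‖q - v‖ = 1 ∧ ∀ u ∈ S, ‖u - v‖ ≤ 1)
    (hc : 3 ≤ S.card) (D : Submodule ℝ E) (hD : Module.finrank ℝ D = 2) (hSD : ∀ u ∈ S, u ∈ D) : False := by
  obtain ⟨u1, u2, u3, h1, h2, h3, h12, h13, h23⟩ := Finset.two_lt_card_iff.1 hc
  have hfd : Module.Finite ℝ D := Module.finite_of_finrank_pos (by omega)
  have hnl : ¬ LinearIndependent ℝ (![⟨u1, hSD u1 h1⟩, ⟨u2, hSD u2 h2⟩, ⟨u3, hSD u3 h3⟩] : Fin 3 → D) := by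
    intro hl
    have := hl.fintype_card_le_finrank
    rw [hD] at this
    simp at this
  obtain ⟨g, hg, i, hi⟩ := Fintype.not_linearIndependent_iff.1 hnl
  have hg' := congrArg (Subtype.val) hg
  simp only [Fin.sum_univ_three] at hg'
  have e : g 0 • u1 + g 1 • u2 + g 2 • u3 = 0 := by simpa using hg'
  have hn : g 0 ≠ 0 ∨ g 1 ≠ 0 ∨ g 2 ≠ 0 := by
    fin_cases i
    · exact Or.inl hi
    · exact Or.inr (Or.inl hi)
    · exact Or.inr (Or.inr hi)
  have gen : ∀ a b c : ℝ, a • u1 + b • u2 + c • u3 = 0 → (a ≠ 0 ∨ b ≠ 0 ∨ c ≠ 0) →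
      ((0 ≤ a ∧ 0 ≤ b) ∨ (0 ≤ a ∧ 0 ≤ c) ∨ (0 ≤ b ∧ 0 ≤ c)) → False := by
    intro a b c e hn hh
    rcases hh with ⟨p, q⟩ | ⟨p, q⟩ | ⟨p, q⟩
    · refine vz_core hS hSS hex h1 h2 h3 h13 h23 (c := -c) p q (by simpa using hn) ?_
      rw [neg_smul]; exact eq_neg_of_add_eq_zero_left e
    · refine vz_core hS hSS hex h1 h3 h2 h12 h23.symm (c := -b) p q (by rw [neg_ne_zero]; tauto) ?_
      rw [neg_smul]; apply eq_neg_of_add_eq_zero_left; rw [← e]; abel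
    · refine vz_core hS hSS hex h2 h3 h1 h12.symm h13.symm (c := -a) p q (by rw [neg_ne_zero]; tauto) ?_
      rw [neg_smul]; apply eq_neg_of_add_eq_zero_left; rw [← e]; abel
  have e' : (-g 0) • u1 + (-g 1) • u2 + (-g 2) • u3 = 0 := by
    have : (-g 0) • u1 + (-g 1) • u2 + (-g 2) • u3 = -(g 0 • u1 + g 1 • u2 + g 2 • u3) := by
      simp only [neg_smul]; abel
    rw [this, e, neg_zero]
  have hn' : -g 0 ≠ 0 ∨ -g 1 ≠ 0 ∨ -g 2 ≠ 0 := by simpa using hn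
  rcases le_total 0 (g 0) with a | a <;> rcases le_total 0 (g 1) with b | b <;>
    rcases le_total 0 (g 2) with c | c
  · exact gen _ _ _ e hn (Or.inl ⟨a, b⟩)
  · exact gen _ _ _ e hn (Or.inl ⟨a, b⟩)
  · exact gen _ _ _ e hn (Or.inr (Or.inl ⟨a, c⟩))
  · exact gen _ _ _ e' hn' (Or.inr (Or.inr ⟨by linarith, by linarith⟩))
  · exact gen _ _ _ e hn (Or.inr (Or.inr ⟨b, c⟩))
  · exact gen _ _ _ e' hn' (Or.inr (Or.inl ⟨by linarith, by linarith⟩))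
  · exact gen _ _ _ e' hn' (Or.inl ⟨by linarith, by linarith⟩)
  · exact gen _ _ _ e' hn' (Or.inl ⟨by linarith, by linarith⟩)

theorem vz_triple (hdim : Module.finrank ℝ E = 3) (p : E) (A : Set E)
    (h : ¬ ∃ P : AffineSubspace ℝ E, p ∈ P ∧ Module.finrank ℝ P.direction = 2 ∧ A ⊆ (P : Set E)) :
    ∃ u ∈ A, ∃ v ∈ A, ∃ w ∈ A, LinearIndependent ℝ ![u - p, v - p, w - p] := by
  have hfd : FiniteDimensional ℝ E := Module.finite_of_finrank_pos (by omega)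
  have hF : Fact (Module.finrank ℝ E = 2 + 1) := ⟨hdim⟩
  let S : Set E := (fun z => z - p) '' A
  have hspan : Submodule.span ℝ S = ⊤ := by
    by_contra hne
    have : (Submodule.span ℝ S)ᗮ ≠ ⊥ := fun hb => hne (Submodule.orthogonal_eq_bot_iff.1 hb)
    obtain ⟨n, hn, hn0⟩ := Submodule.exists_mem_ne_zero_of_ne_bot this
    apply h
    refine ⟨AffineSubspace.mk' p (Submodule.span ℝ {n})ᗮ, AffineSubspace.self_mem_mk' _ _, ?_, ?_⟩
    · rw [AffineSubspace.direction_mk']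
      exact Submodule.finrank_orthogonal_span_singleton hn0
    · intro z hz
      show z ∈ AffineSubspace.mk' p (Submodule.span ℝ {n})ᗮ
      rw [AffineSubspace.mem_mk', vsub_eq_sub, Submodule.mem_orthogonal_singleton_iff_inner_left]
      exact (Submodule.mem_orthogonal _ _).1 hn _ (Submodule.subset_span ⟨z, hz, rfl⟩)
  obtain ⟨f, hf, -, hl⟩ := Submodule.exists_fun_fin_finrank_span_eq ℝ S
  have hc : Module.finrank ℝ (Submodule.span ℝ S) = 3 := by rw [hspan, finrank_top, hdim]
  have h3 : ∃ g : Fin 3 → E, (∀ i, g i ∈ S) ∧ LinearIndependent ℝ g := by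
    refine ⟨f ∘ Fin.cast hc.symm, fun i => hf _, ?_⟩
    exact hl.comp _ (Fin.cast_injective _)
  obtain ⟨g, hg, hgl⟩ := h3
  obtain ⟨u, hu, eu⟩ := hg 0
  obtain ⟨v, hv, ev⟩ := hg 1
  obtain ⟨w, hw, ew⟩ := hg 2
  refine ⟨u, hu, v, hv, w, hw, ?_⟩
  have : ![u - p, v - p, w - p] = g := by
    ext i : 1
    fin_cases i
    · exact eu
    · exact ev
    · exact ew
  rw [this]; exact hgl

theorem vzK_card (X : Finset E) (x : X) :
    (vzK X (x, true)).card = (X.filter fun y => dist x.1 y = 1).card := by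
  unfold vzK
  apply Finset.card_image_of_injective
  intro a b h
  simpa using h

end Fin3


open Classical in
/-- **Grünbaum–Heppes–Straszewicz, the other direction.**
Let `X ⊂ ℝ³` be a Vázsonyi set: a finite set of diameter `1` with `m` points, exactly
`2m − 2` unordered pairs at distance `1` (counted as `2 * (2m - 2)` ordered pairs of
distinct points), and every point at distance `1` from at least `3` other points.  Let
`Ω` be the intersection of the closed unit balls centered at the points of `X`.  Then
the set of vertices of `Ω` is exactly `X`, where a point `p` of the frontier of `Ω` is a
*vertex* of `Ω` if the set `A_p = {x ∈ X : dist p x = 1}` is not contained in any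
2-dimensional affine plane through `p`.  (That is, `Ω` is a Reuleaux polyhedron with
vertex set `X`.) -/
theorem vazsonyi_is_reuleaux_polyhedron
    (X : Finset (EuclideanSpace ℝ (Fin 3)))
    (hdiam_le : ∀ x ∈ X, ∀ y ∈ X, dist x y ≤ 1)
    (hdiam_eq : ∃ x ∈ X, ∃ y ∈ X, dist x y = 1)
    (hcount : (X.offDiag.filter fun p => dist p.1 p.2 = 1).card = 2 * (2 * X.card - 2))
    (hdeg : ∀ x ∈ X, 3 ≤ (X.filter fun y => dist x y = 1).card)
    (Ω : Set (EuclideanSpace ℝ (Fin 3)))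
    (hΩ : Ω = ⋂ x ∈ X, Metric.closedBall x 1) :
    {p : EuclideanSpace ℝ (Fin 3) |
      p ∈ frontier Ω ∧
        ¬ ∃ P : AffineSubspace ℝ (EuclideanSpace ℝ (Fin 3)),
          p ∈ P ∧ Module.finrank ℝ P.direction = 2 ∧
          {x : EuclideanSpace ℝ (Fin 3) | x ∈ X ∧ dist p x = 1} ⊆ (P : Set (EuclideanSpace ℝ (Fin 3)))}
      = (X : Set (EuclideanSpace ℝ (Fin 3))) := by

  have hdim : Module.finrank ℝ (EuclideanSpace ℝ (Fin 3)) = 3 := by simp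
  have hcl : IsClosed Ω := by
    rw [hΩ]
    exact isClosed_biInter fun x _ => Metric.isClosed_closedBall
  have hdeg' : ∀ y ∈ X, ∀ x : EuclideanSpace ℝ (Fin 3), ∃ z ∈ X, z ≠ x ∧ ‖z - y‖ = 1 := by
    intro y hy x
    obtain ⟨z, hz, hne⟩ := Finset.exists_mem_ne (lt_of_lt_of_le (by norm_num) (hdeg y hy)) x
    rw [Finset.mem_filter] at hz
    exact ⟨z, hz.1, hne, by rw [← dist_eq_norm, dist_comm]; exact hz.2⟩
  have hX : ∀ x ∈ X, ∀ y ∈ X, ‖y - x‖ ≤ 1 := fun x hx y hy => by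
    rw [← dist_eq_norm]; exact hdiam_le y hy x hx
  ext p
  simp only [Set.mem_setOf_eq, Finset.mem_coe]
  constructor
  · rintro ⟨hf, hv⟩
    by_contra hp
    have hpΩ : p ∈ Ω := hcl.frontier_subset hf
    have hpd : ∀ x ∈ X, ‖p - x‖ ≤ 1 := by
      intro x hx
      rw [hΩ] at hpΩ
      have := Set.mem_iInter₂.1 hpΩ x hx
      rwa [Metric.mem_closedBall, dist_eq_norm] at this
    obtain ⟨u, ⟨hu, hu1⟩, v, ⟨hv', hv1⟩, w, ⟨hw, hw1⟩, hli⟩ := vz_triple hdim p _ hv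
    have huv : u ≠ v := by
      intro h
      have := hli.injective (a₁ := 0) (a₂ := 1) (by simp [h])
      simp at this
    have huw : u ≠ w := by
      intro h
      have := hli.injective (a₁ := 0) (a₂ := 2) (by simp [h])
      simp at this
    have hvw : v ≠ w := by
      intro h
      have := hli.injective (a₁ := 1) (a₂ := 2) (by simp [h])
      simp at this
    let A := X.filter fun y => dist p y = 1
    have hA : 3 ≤ A.card := Finset.two_lt_card_iff.2
      ⟨u, v, w, Finset.mem_filter.2 ⟨hu, hu1⟩, Finset.mem_filter.2 ⟨hv', hv1⟩,
        Finset.mem_filter.2 ⟨hw, hw1⟩, huv, huw, hvw⟩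
    have hn : ∀ z, dist p z = 1 → ‖z - p‖ = 1 := fun z hz => by
      rw [← dist_eq_norm, dist_comm]; exact hz
    have res := vz_count hdim (insert p X) (by
        intro x hx y hy
        rcases Finset.mem_insert.1 hx with hx' | hx' <;> rcases Finset.mem_insert.1 hy with hy' | hy'
        · rw [hx', hy']; simp
        · rw [hx', norm_sub_rev]; exact hpd y hy'
        · rw [hy']; exact hpd x hx'
        · exact hX x hx' y hy')
      (by
        intro y hy x
        rcases Finset.mem_insert.1 hy with rfl | hy
        · obtain ⟨z, hz, hne⟩ := Finset.exists_mem_ne (lt_of_lt_of_le (by norm_num) hA) x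
          obtain ⟨hz1, hz2⟩ := Finset.mem_filter.1 hz
          exact ⟨z, Finset.mem_insert_of_mem hz1, hne, hn z hz2⟩
        · obtain ⟨z, hz, a, b⟩ := hdeg' y hy x
          exact ⟨z, Finset.mem_insert_of_mem hz, a, b⟩)
      p (Finset.mem_insert_self _ _) u v w (Finset.mem_insert_of_mem hu) (Finset.mem_insert_of_mem hv')
      (Finset.mem_insert_of_mem hw) (hn u hu1) (hn v hv1) (hn w hw1) hli
    rw [Finset.card_insert_of_notMem hp] at res
    have hA1 : (A.image fun z => (p, z)).card = A.card :=
      Finset.card_image_of_injective _ fun a b h => (Prod.mk.inj h).2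
    have hA2 : (A.image fun z => (z, p)).card = A.card :=
      Finset.card_image_of_injective _ fun a b h => (Prod.mk.inj h).1
    have hAX : ∀ z ∈ A, z ∈ X ∧ dist p z = 1 := fun z hz => Finset.mem_filter.1 hz
    have hd1 : Disjoint (X.offDiag.filter fun p => dist p.1 p.2 = 1) (A.image fun z => (p, z)) := by
      rw [Finset.disjoint_left]
      rintro ⟨a, b⟩ h1 h2
      obtain ⟨z, _, h⟩ := Finset.mem_image.1 h2
      have := (Finset.mem_offDiag.1 (Finset.mem_filter.1 h1).1).1
      rw [← h] at this
      exact hp this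
    have hd2 : Disjoint ((X.offDiag.filter fun p => dist p.1 p.2 = 1) ∪ (A.image fun z => (p, z)))
        (A.image fun z => (z, p)) := by
      rw [Finset.disjoint_left]
      rintro ⟨a, b⟩ h1 h2
      obtain ⟨z, _, h⟩ := Finset.mem_image.1 h2
      have hb : b = p := (Prod.mk.inj h).2.symm
      rcases Finset.mem_union.1 h1 with h1 | h1
      · have := (Finset.mem_offDiag.1 (Finset.mem_filter.1 h1).1).2.1
        rw [hb] at this
        exact hp this
      · obtain ⟨z', hz', h'⟩ := Finset.mem_image.1 h1
        have : b = z' := (Prod.mk.inj h').2.symm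
        exact hp (by rw [← hb, this]; exact (hAX z' hz').1)
    have hsub : (X.offDiag.filter fun p => dist p.1 p.2 = 1) ∪ (A.image fun z => (p, z)) ∪
        (A.image fun z => (z, p)) ⊆ (insert p X).offDiag.filter fun p => dist p.1 p.2 = 1 := by
      rintro ⟨a, b⟩ h
      rw [Finset.mem_filter, Finset.mem_offDiag]
      rcases Finset.mem_union.1 h with h | h
      · rcases Finset.mem_union.1 h with h | h
        · obtain ⟨h1, h2⟩ := Finset.mem_filter.1 h
          obtain ⟨h3, h4, h5⟩ := Finset.mem_offDiag.1 h1
          exact ⟨⟨Finset.mem_insert_of_mem h3, Finset.mem_insert_of_mem h4, h5⟩, h2⟩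
        · obtain ⟨z, hz, h⟩ := Finset.mem_image.1 h
          obtain ⟨rfl, rfl⟩ := Prod.mk.inj h
          exact ⟨⟨Finset.mem_insert_self _ _, Finset.mem_insert_of_mem (hAX z hz).1,
            fun e => hp (by rw [show p = z from e]; exact (hAX z hz).1)⟩, (hAX z hz).2⟩
      · obtain ⟨z, hz, h⟩ := Finset.mem_image.1 h
        obtain ⟨rfl, rfl⟩ := Prod.mk.inj h
        exact ⟨⟨Finset.mem_insert_of_mem (hAX z hz).1, Finset.mem_insert_self _ _,
          fun e => hp (by rw [← show z = p from e]; exact (hAX z hz).1)⟩, by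
            show dist z p = 1
            rw [dist_comm]; exact (hAX z hz).2⟩
    have hle := Finset.card_le_card hsub
    rw [Finset.card_union_of_disjoint hd2, Finset.card_union_of_disjoint hd1, hA1, hA2, hcount] at hle
    omega
  · intro hp
    constructor
    · rw [frontier, hcl.closure_eq]
      refine ⟨?_, ?_⟩
      · rw [hΩ]
        exact Set.mem_iInter₂.2 fun y hy => Metric.mem_closedBall.2 (hdiam_le p hp y hy)
      · intro hi
        obtain ⟨y, hy, -, hpy⟩ := hdeg' p hp p
        have hsub : Ω ⊆ Metric.closedBall y 1 := by rw [hΩ]; exact Set.biInter_subset_of_mem hy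
        have := interior_mono hsub hi
        rw [interior_closedBall y one_ne_zero, Metric.mem_ball, dist_comm, dist_eq_norm, hpy] at this
        exact lt_irrefl _ this
    · rintro ⟨P, hpP, hP2, hAP⟩
      have hcard := vzK_card X ⟨p, hp⟩
      refine vz_core2 (S := vzK X (⟨p, hp⟩, true)) ?_ ?_ ?_ (by rw [hcard]; exact hdeg p hp) P.direction hP2 ?_
      · intro u hu
        obtain ⟨z, hz, h, rfl⟩ := vzK_t.1 hu
        exact h
      · intro u hu v hv
        obtain ⟨z, hz, h, rfl⟩ := vzK_t.1 hu
        obtain ⟨z', hz', h', rfl⟩ := vzK_t.1 hv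
        rw [sub_sub_sub_cancel_right]; exact hX _ hz' _ hz
      · intro q hq
        obtain ⟨y, hy, h, rfl⟩ := vzK_t.1 hq
        obtain ⟨z, hz, hzx, hzy⟩ := hdeg' y hy p
        refine ⟨z - p, sub_ne_zero.2 hzx, ?_, ?_⟩
        · rw [sub_sub_sub_cancel_right, norm_sub_rev]; exact hzy
        · intro u hu
          obtain ⟨z', hz', h', rfl⟩ := vzK_t.1 hu
          rw [sub_sub_sub_cancel_right]; exact hX _ hz _ hz'
      · intro u hu
        obtain ⟨z, hz, h, rfl⟩ := vzK_t.1 hu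
        have hzP : z ∈ P := hAP ⟨hz, by rw [dist_comm, dist_eq_norm]; exact h⟩
        exact AffineSubspace.vsub_mem_direction hzP hpP
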